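/- arXiv:2406.13333 — 5 statements merged into one kernel-verified Lean document; each statement's English description precedes it below -/
import Mathlib

section
/- Let n ≥ 1 and let f : 𝕋 → ℂ be n-times differentiable on 𝕋 with f^{(n)} bounded. Then there exist a sequence (f_j)_{j≥1} of n-times continuously differentiable functions on 𝕋 and a constant M > 0 such that: (1) for every 1 ≤ k ≤ n−1, the sequence (f_j^{[k]})_j converges uniformly to f^{[k]} on 𝕋^{k+1}; (2) the sequence (f_j^{[n]})_j converges pointwise to f^{[n]} on all of 𝕋^{n+1} (including the diagonal); (3) for every 1 ≤ k ≤ n and every j, sup_{𝕋} |f_j^{(k)}| ≤ M. -/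
/-!
Approximate `f` by its one-sided averages `F_ε(z) = ε⁻¹ ∫₀^ε f(z e^{it}) dt` with `ε = 1 / (j + 1)`.
The kernel is a box, not a smooth mollifier: the top derivative of `F_ε` is then built from a
difference quotient of `f⁽ⁿ⁻¹⁾` (`avgTower`). Hence it is continuous, it is bounded because `f⁽ⁿ⁻¹⁾`
is Lipschitz, and it converges to `f⁽ⁿ⁾` at every single point, although `f⁽ⁿ⁾` need not be
continuous (`tendsto_avgTower_succ`). Derivatives of lower order converge
uniformly, with error `O(ε)` (`exists_norm_avgTower_sub_le`).

To pass from derivatives to divided differences, freeze all variables but the first: the function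
`z ↦ f^{[m]}(z, w₁, …, wₘ)` arises from `f` by applying successively, for `a = wₘ, …, w₁`, the
operator sending `g` to its difference quotient `q(z) = (g(z) - g(a)) / (z - a)`, `q(a) = g'(a)`
(`divTower_eq_divDiff`). Everything reduces to one operator, of which three facts are needed.

* It costs exactly one order of differentiability, even at `a` and without continuity of the top
  derivative, and `q⁽ᵏ⁾(a) = g⁽ᵏ⁺¹⁾(a) / (k + 1)` (`Tower.slopeTower`). The reason is the identity
  `((z - a)^{k+1} q⁽ᵏ⁾(z))' = (z - a)^k g⁽ᵏ⁺¹⁾(z)`, combined with a mean value inequality on the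
  shorter arc (`circle_mvt`).
* The same identity gives `sup |q⁽ᵏ⁾| ≤ (π / 2) sup |g⁽ᵏ⁺¹⁾|`, uniformly in `a`
  (`norm_slopeTower_le`). Applied to the tower of `F_ε - f`, it yields uniform convergence of the
  divided differences of order less than `n`.
* For fixed `z` and `a`, the number `q⁽ᵏ⁾(z)` is a fixed linear combination of finitely many values
  of derivatives of `g` at `z` and `a` (`tendsto_slopeTower`). So pointwise convergence of all
  derivatives up to order `n` yields pointwise convergence of the divided differences of order `n`.
-/

/- STATEMENT 1: Approximation of a function on the circle with bounded n-th
derivative by C^n(𝕋) functions whose divided differences converge uniformly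
(orders 1,…,n−1) and pointwise everywhere (order n), with uniformly bounded
derivatives of orders 1,…,n. -/

open Filter Topology
open scoped Classical

noncomputable section

/-- The unit circle 𝕋 ⊆ ℂ. -/
def circleT : Set ℂ := {z : ℂ | ‖z‖ = 1}

/-- Derivative along the circle (derivative within 𝕋). -/
def cderiv (f : ℂ → ℂ) : ℂ → ℂ := fun z => derivWithin f circleT z

/-- `f` is `n`-times differentiable on 𝕋 (no continuity of the top derivative assumed). -/
def CircleDiffOn (n : ℕ) (f : ℂ → ℂ) : Prop :=
  ∀ k < n, ∀ z ∈ circleT, DifferentiableWithinAt ℂ (cderiv^[k] f) circleT z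

/-- Divided differences `f^{[n]}` of a function on 𝕋. -/
def divDiff (f : ℂ → ℂ) : (n : ℕ) → (Fin (n + 1) → ℂ) → ℂ
  | 0 => fun v => f (v 0)
  | n + 1 => fun v =>
      if v 0 = v 1 then
        cderiv (fun z => divDiff f n (Fin.cons z fun i => v i.succ.succ)) (v 0)
      else
        (divDiff f n (Fin.cons (v 0) fun i => v i.succ.succ)
          - divDiff f n (Fin.cons (v 1) fun i => v i.succ.succ)) / (v 0 - v 1)

/-! ### Calculus on the circle -/

lemma circleT_ne_zero {z : ℂ} (hz : z ∈ circleT) : z ≠ 0 := by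
  rintro rfl
  simp [circleT] at hz

lemma mul_exp_mem {z : ℂ} (hz : z ∈ circleT) (s : ℝ) :
    z * Complex.exp (s * Complex.I) ∈ circleT := by
  have h : ‖z‖ = 1 := hz
  simp [circleT, Complex.norm_exp_ofReal_mul_I, h]

lemma circleT_compact : IsCompact circleT := by
  have : circleT = Metric.sphere (0 : ℂ) 1 := by
    ext z; simp [circleT]
  rw [this]
  exact isCompact_sphere 0 1

lemma exp_arg_div {z w : ℂ} (hz : z ∈ circleT) (hw : w ∈ circleT) :
    z * Complex.exp ((w / z).arg * Complex.I) = w := by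
  have h1 : ‖z‖ = 1 := hz
  have h2 : ‖w‖ = 1 := hw
  have := Complex.norm_mul_exp_arg_mul_I (w / z)
  rw [norm_div, h1, h2] at this
  have hz0 := circleT_ne_zero hz
  simp only [div_one, Complex.ofReal_one, one_mul] at this
  rw [this]
  field_simp

lemma hasDerivAt_path (z : ℂ) (t : ℝ) (c : ℂ) :
    HasDerivAt (fun s : ℝ => z * Complex.exp (s * c)) (z * Complex.exp (t * c) * c) t := by
  have h1 : HasDerivAt (fun s : ℂ => z * Complex.exp (s * c))
      (z * (Complex.exp (t * c) * (1 * c))) (t : ℂ) :=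
    (((hasDerivAt_id (t : ℂ)).mul_const c).cexp).const_mul z
  have := h1.comp_ofReal
  convert this using 1
  ring

/-- A derivative along the circle can be computed in the angular variable. -/
lemma hasDerivWithinAt_of_angle {F : ℂ → ℂ} {d z : ℂ} (hz : z ∈ circleT)
    (h : HasDerivAt (fun s : ℝ => F (z * Complex.exp (s * Complex.I))) (d * (z * Complex.I)) 0) :
    HasDerivWithinAt F d circleT z := by
  have hz0 := circleT_ne_zero hz
  have hp := hasDerivAt_path z 0 Complex.I
  rw [hasDerivAt_iff_tendsto_slope] at h hp
  have hne : z * Complex.exp ((0 : ℝ) * Complex.I) * Complex.I ≠ 0 := by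
    simp [hz0]
  have hq := h.div hp hne
  rw [hasDerivWithinAt_iff_tendsto_slope]
  have harg : Tendsto (fun w : ℂ => (w / z).arg) (𝓝[circleT \ {z}] z) (𝓝[{0}ᶜ] (0 : ℝ)) := by
    apply tendsto_nhdsWithin_iff.2
    constructor
    · have h1 : ContinuousAt (fun w : ℂ => (w / z).arg) z := by
        apply ContinuousAt.comp (f := fun w : ℂ => w / z) (g := Complex.arg)
        · apply Complex.continuousAt_arg
          simp [hz0]
        · fun_prop
      have h2 := h1.tendsto
      simp only [div_self hz0, Complex.arg_one] at h2
      exact h2.mono_left nhdsWithin_le_nhds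
    · filter_upwards [self_mem_nhdsWithin] with w hw h0
      apply hw.2
      have := exp_arg_div hz hw.1
      simp only [Set.mem_singleton_iff] at h0
      rw [h0] at this
      simpa using this.symm
  have hq2 := hq.comp harg
  have hlim : d * (z * Complex.I) / (z * Complex.exp ((0 : ℝ) * Complex.I) * Complex.I) = d := by
    have := Complex.I_ne_zero
    simp
    field_simp
  rw [hlim] at hq2
  refine hq2.congr' ?_
  filter_upwards [self_mem_nhdsWithin, tendsto_nhdsWithin_iff.1 harg |>.2] with w hw hs
  simp only [Function.comp, Pi.div_apply, slope_def_module, exp_arg_div hz hw.1]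
  have hs' : ((w / z).arg - 0 : ℝ) ≠ 0 := by simpa using hs
  have hwz : w - z ≠ 0 := sub_ne_zero.2 hw.2
  simp only [Complex.ofReal_zero, zero_mul, Complex.exp_zero, mul_one, smul_eq_mul,
    Complex.real_smul]
  have : ((((w / z).arg - 0 : ℝ)⁻¹ : ℝ) : ℂ) ≠ 0 := by exact_mod_cast inv_ne_zero hs'
  rw [mul_div_mul_left _ _ this]
  field_simp

lemma hasDerivAt_angle {F : ℂ → ℂ} {d z : ℂ} (hz : z ∈ circleT) (t : ℝ)
    (h : HasDerivWithinAt F d circleT (z * Complex.exp (t * Complex.I))) :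
    HasDerivAt (fun s : ℝ => F (z * Complex.exp (s * Complex.I)))
      (d * (z * Complex.exp (t * Complex.I) * Complex.I)) t :=
  HasDerivWithinAt.comp_hasDerivAt t h (hasDerivAt_path z t Complex.I)
    (Eventually.of_forall fun s => mul_exp_mem hz s)

lemma uniqueDiff_circleT {z : ℂ} (hz : z ∈ circleT) : UniqueDiffWithinAt ℂ circleT z := by
  rw [uniqueDiffWithinAt_iff_accPt, accPt_iff_frequently]
  have hz0 := circleT_ne_zero hz
  have hc : Tendsto (fun s : ℝ => z * Complex.exp (s * Complex.I)) (𝓝[≠] 0) (𝓝 z) := by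
    have := (hasDerivAt_path z 0 Complex.I).continuousAt.tendsto
    simp only [Complex.ofReal_zero, zero_mul, Complex.exp_zero, mul_one] at this
    exact this.mono_left nhdsWithin_le_nhds
  refine hc.frequently (Eventually.frequently ?_)
  have hd := (hasDerivAt_path z 0 Complex.I).eventually_ne (c := z) (by simp [hz0])
  filter_upwards [hd] with s hs
  exact ⟨hs, mul_exp_mem hz s⟩

lemma HasDerivWithinAt.cderiv_eq {F : ℂ → ℂ} {d z : ℂ} (h : HasDerivWithinAt F d circleT z)
    (hz : z ∈ circleT) : cderiv F z = d :=
  h.derivWithin (uniqueDiff_circleT hz)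

lemma norm_mul_exp_sub {z : ℂ} (hz : z ∈ circleT) (x y : ℝ) :
    ‖z * Complex.exp (x * Complex.I) - z * Complex.exp (y * Complex.I)‖
      = 2 * |Real.sin ((x - y) / 2)| := by
  have h : ‖z‖ = 1 := hz
  have e : z * Complex.exp (x * Complex.I) - z * Complex.exp (y * Complex.I)
      = z * Complex.exp (y * Complex.I) * (Complex.exp (Complex.I * ((x - y : ℝ) : ℂ)) - 1) := by
    rw [mul_sub, mul_assoc, mul_one, ← Complex.exp_add]
    congr 3
    push_cast; ring_nf
  rw [e, norm_mul, norm_mul, h, Complex.norm_exp_ofReal_mul_I,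
    Complex.norm_exp_I_mul_ofReal_sub_one]
  simp

/-- Mean value inequality along the shorter arc from `z` to `a`. The points of that arc are no
farther from `a` than `z` is, the arc is at most `π / 2` times as long as the chord, and
differentiability at the endpoint `a` is not needed. -/
lemma circle_mvt {H H' : ℂ → ℂ} {a z : ℂ} {B : ℝ} (ha : a ∈ circleT) (hz : z ∈ circleT)
    (hc : ContinuousWithinAt H circleT a)
    (hd : ∀ w ∈ circleT, w ≠ a → HasDerivWithinAt H (H' w) circleT w)
    (hB : ∀ w ∈ circleT, w ≠ a → ‖w - a‖ ≤ ‖z - a‖ → ‖H' w‖ ≤ B) :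
    ‖H z - H a‖ ≤ Real.pi / 2 * B * ‖z - a‖ := by
  by_cases hza : z = a
  · simp [hza]
  have hcont : ContinuousOn H circleT := fun w hw => by
    by_cases h : w = a
    · rw [h]; exact hc
    · exact (hd w hw h).continuousWithinAt
  have hB0 : 0 ≤ B := (norm_nonneg _).trans (hB z hz hza le_rfl)
  have hend := exp_arg_div hz ha
  set θ : ℝ := (a / z).arg with hθ
  have hθpi : |θ| ≤ Real.pi := Complex.abs_arg_le_pi _
  have hθ0 : 0 < |θ| := by
    rw [abs_pos]; intro h0
    rw [h0] at hend
    exact hza (by simpa using hend)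
  have hpath : ∀ s : ℝ, Complex.exp (s * (θ * Complex.I))
      = Complex.exp (((s * θ : ℝ) : ℂ) * Complex.I) := fun s => by
    push_cast; ring_nf
  -- the chord from `a` to the point with parameter `s`
  have hdist : ∀ s : ℝ, ‖z * Complex.exp (s * (θ * Complex.I)) - a‖
      = 2 * |Real.sin ((s * θ - θ) / 2)| := fun s => by
    conv_lhs => rw [hpath, ← hend]
    exact norm_mul_exp_sub hz _ _
  have hza' : ‖z - a‖ = 2 * |Real.sin (θ / 2)| := by
    have := hdist 0
    simp only [Complex.ofReal_zero, zero_mul, Complex.exp_zero, mul_one, zero_sub] at this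
    rw [this, neg_div, Real.sin_neg, abs_neg]
  have habs : ∀ s ∈ Set.Ico (0 : ℝ) 1, |(s * θ - θ) / 2| = (1 - s) * |θ| / 2 := fun s hs => by
    rw [show (s * θ - θ) / 2 = -((1 - s) * θ / 2) by ring, abs_neg, abs_div, abs_mul,
      abs_of_pos (by linarith [hs.2] : 0 < 1 - s), abs_two]
  have hle : ∀ s ∈ Set.Ico (0 : ℝ) 1, (1 - s) * |θ| ≤ |θ| := fun s hs => by
    nlinarith [hs.1]
  have hmem : ∀ s : ℝ, z * Complex.exp (s * (θ * Complex.I)) ∈ circleT := fun s => by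
    rw [hpath]; exact mul_exp_mem hz _
  have hnear : ∀ s ∈ Set.Ico (0 : ℝ) 1,
      ‖z * Complex.exp (s * (θ * Complex.I)) - a‖ ≤ ‖z - a‖ := fun s hs => by
    rw [hdist, hza', Real.abs_sin_eq_sin_abs_of_abs_le_pi,
      Real.abs_sin_eq_sin_abs_of_abs_le_pi, habs s hs, abs_div, abs_two]
    · have := hle s hs
      have h1 : 0 ≤ (1 - s) * |θ| := mul_nonneg (by linarith [hs.2]) hθ0.le
      gcongr
      apply Real.sin_le_sin_of_le_of_le_pi_div_two <;> linarith [Real.pi_pos]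
    · rw [abs_div, abs_two]; linarith [Real.pi_pos]
    · rw [habs s hs]; linarith [hle s hs, Real.pi_pos]
  have hne : ∀ s ∈ Set.Ico (0 : ℝ) 1, z * Complex.exp (s * (θ * Complex.I)) ≠ a := by
    intro s hs h
    have h1 := hdist s
    rw [h, sub_self, norm_zero] at h1
    have h2 := Real.mul_abs_le_abs_sin (x := (s * θ - θ) / 2)
      (by rw [habs s hs]; linarith [hle s hs])
    rw [habs s hs] at h2
    have h3 : 0 < (1 - s) * |θ| / 2 := by
      have : 0 < 1 - s := by linarith [hs.2]
      positivity
    have h4 : 0 < 2 / Real.pi * ((1 - s) * |θ| / 2) := by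
      have := Real.pi_pos
      positivity
    linarith
  have key := norm_image_sub_le_of_norm_deriv_right_le_segment
    (f := fun s : ℝ => H (z * Complex.exp (s * (θ * Complex.I)))) (a := 0) (b := 1)
    (f' := fun s : ℝ => H' (z * Complex.exp (s * (θ * Complex.I)))
      * (z * Complex.exp (s * (θ * Complex.I)) * (θ * Complex.I)))
    (C := B * |θ|)
    (by
      apply ContinuousOn.comp (t := circleT) hcont
      · apply Continuous.continuousOn; fun_prop
      · intro s _; exact hmem s)
    (by
      intro s hs
      exact (HasDerivWithinAt.comp_hasDerivAt s (hd _ (hmem s) (hne s hs))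
        (hasDerivAt_path z s (θ * Complex.I))
        (Eventually.of_forall hmem)).hasDerivWithinAt)
    (by
      intro s hs
      have h1 : ‖z * Complex.exp (s * (θ * Complex.I))‖ = 1 := hmem s
      rw [norm_mul, norm_mul, h1, one_mul, norm_mul, Complex.norm_I, mul_one, Complex.norm_real,
        Real.norm_eq_abs]
      gcongr
      exact hB _ (hmem s) (hne s hs) (hnear s hs))
    1 (by simp)
  simp only [Complex.ofReal_one, one_mul, Complex.ofReal_zero, zero_mul, Complex.exp_zero,
    mul_one, sub_zero] at key
  rw [hend, norm_sub_rev] at key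
  have hjordan := Real.mul_abs_le_abs_sin (x := θ / 2) (by rw [abs_div, abs_two]; linarith)
  have hchord : |θ| ≤ Real.pi / 2 * ‖z - a‖ := by
    rw [hza']
    rw [abs_div, abs_two] at hjordan
    have hpi := Real.pi_pos
    calc |θ| = Real.pi * (2 / Real.pi * (|θ| / 2)) := by field_simp
      _ ≤ Real.pi * |Real.sin (θ / 2)| := by gcongr
      _ = _ := by ring
  calc _ ≤ B * |θ| := key
    _ ≤ B * (Real.pi / 2 * ‖z - a‖) := by gcongr
    _ = _ := by ring

/-! ### Derivative towers -/

/-- `Tower n G` says that `G 0, …, G n` are the successive derivatives of `G 0` along the circle;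
nothing is said about `G k` for `k > n`, nor about values off the circle. -/
def Tower (n : ℕ) (G : ℕ → ℂ → ℂ) : Prop :=
  ∀ k < n, ∀ z ∈ circleT, HasDerivWithinAt (G k) (G (k + 1) z) circleT z

lemma Tower.mono {m n : ℕ} {G : ℕ → ℂ → ℂ} (hG : Tower n G) (h : m ≤ n) : Tower m G :=
  fun k hk => hG k (hk.trans_le h)

lemma Tower.sub {n : ℕ} {G₁ G₂ : ℕ → ℂ → ℂ} (h₁ : Tower n G₁) (h₂ : Tower n G₂) :
    Tower n (fun k z => G₁ k z - G₂ k z) :=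
  fun k hk z hz => (h₁ k hk z hz).sub (h₂ k hk z hz)

lemma Tower.iterate_cderiv {n : ℕ} {G : ℕ → ℂ → ℂ} (hG : Tower n G) :
    ∀ k ≤ n, ∀ z ∈ circleT, cderiv^[k] (G 0) z = G k z := by
  intro k
  induction k with
  | zero => intro _ z _; rfl
  | succ k ih =>
    intro hk z hz
    have heq : Set.EqOn (cderiv^[k] (G 0)) (G k) circleT := ih (by omega)
    rw [Function.iterate_succ_apply']
    exact ((hG k hk z hz).congr_of_mem heq hz).cderiv_eq hz

lemma Tower.circleDiffOn {n : ℕ} {G : ℕ → ℂ → ℂ} (hG : Tower n G) : CircleDiffOn n (G 0) := by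
  intro k hk z hz
  have heq : Set.EqOn (cderiv^[k] (G 0)) (G k) circleT := hG.iterate_cderiv k hk.le
  exact ((hG k hk z hz).congr_of_mem heq hz).differentiableWithinAt

lemma CircleDiffOn.tower {n : ℕ} {f : ℂ → ℂ} (hf : CircleDiffOn n f) :
    Tower n (fun k => cderiv^[k] f) := by
  intro k hk z hz
  simp only [Function.iterate_succ_apply']
  exact (hf k hk z hz).hasDerivWithinAt

/-- The derivatives of the difference quotient `z ↦ (G 0 z - G 0 a) / (z - a)`. Off the diagonal
they come from differentiating `(z - a) * q z = G 0 z - G 0 a` repeatedly; the value at `a` is the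
one forced by the Taylor expansion of `G 0` at `a`. -/
def slopeTower (a : ℂ) (G : ℕ → ℂ → ℂ) : ℕ → ℂ → ℂ
  | 0 => fun z => if z = a then G 1 a else (G 0 z - G 0 a) / (z - a)
  | l + 1 => fun z => if z = a then G (l + 2) a / (l + 2)
      else (G (l + 1) z - (l + 1) * slopeTower a G l z) / (z - a)

lemma slopeTower_self (a : ℂ) (G : ℕ → ℂ → ℂ) (l : ℕ) :
    slopeTower a G l a = G (l + 1) a / (l + 1) := by
  cases l with
  | zero => simp [slopeTower]
  | succ l =>
    simp only [slopeTower, if_true]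
    push_cast; ring_nf

lemma slopeTower_mul_zero (a : ℂ) (G : ℕ → ℂ → ℂ) (z : ℂ) :
    (z - a) * slopeTower a G 0 z = G 0 z - G 0 a := by
  by_cases h : z = a
  · simp [h]
  · have : z - a ≠ 0 := sub_ne_zero.2 h
    simp only [slopeTower, h, if_false]
    field_simp

lemma slopeTower_mul_succ (a : ℂ) (G : ℕ → ℂ → ℂ) (l : ℕ) (z : ℂ) :
    (z - a) * slopeTower a G (l + 1) z = G (l + 1) z - (l + 1) * slopeTower a G l z := by
  by_cases h : z = a
  · have : (l : ℂ) + 1 ≠ 0 := by exact_mod_cast Nat.succ_ne_zero l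
    rw [h, slopeTower_self a G l]
    field_simp
    ring
  · have : z - a ≠ 0 := sub_ne_zero.2 h
    rw [slopeTower]
    simp only [h, if_false]
    field_simp

lemma nhds_circle_ne {a z : ℂ} (h : z ≠ a) : ∀ᶠ w in 𝓝[circleT] z, w ≠ a :=
  nhdsWithin_le_nhds (isOpen_ne.mem_nhds h)

lemma hasDerivWithinAt_slopeTower_of_ne {n : ℕ} {G : ℕ → ℂ → ℂ} (hG : Tower n G) {a : ℂ} :
    ∀ k < n, ∀ z ∈ circleT, z ≠ a →
      HasDerivWithinAt (slopeTower a G k) (slopeTower a G (k + 1) z) circleT z := by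
  intro k
  induction k with
  | zero =>
    intro hk z hz hza
    have hne : z - a ≠ 0 := sub_ne_zero.2 hza
    have h1 := ((hG 0 hk z hz).sub_const (G 0 a)).div
      ((hasDerivWithinAt_id z circleT).sub_const a) hne
    have h2 : HasDerivWithinAt (slopeTower a G 0) _ circleT z :=
      h1.congr_of_eventuallyEq (by
        filter_upwards [nhds_circle_ne hza] with w hw
        simp [slopeTower, hw]) (by simp [slopeTower, hza])
    convert h2 using 1
    simp only [slopeTower, hza, if_false, id]
    push_cast
    field_simp
    ring
  | succ k ih =>
    intro hk z hz hza
    have hne : z - a ≠ 0 := sub_ne_zero.2 hza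
    have h1 := ((hG (k + 1) hk z hz).sub ((ih (by omega) z hz hza).const_mul ((k : ℂ) + 1))).div
      ((hasDerivWithinAt_id z circleT).sub_const a) hne
    have h2 : HasDerivWithinAt (slopeTower a G (k + 1)) _ circleT z :=
      h1.congr_of_eventuallyEq (by
        filter_upwards [nhds_circle_ne hza] with w hw
        simp [slopeTower, hw]) (by simp [slopeTower, hza])
    convert h2 using 1
    have e1 := slopeTower_mul_succ a G (k + 1) z
    have e2 := slopeTower_mul_succ a G k z
    rw [eq_div_iff (by simpa using hne)]
    simp only [id, Pi.sub_apply]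
    push_cast at e1 ⊢
    linear_combination (z - a) * e1 - e2

/-- The function `(z - a) ^ (k + 1) * q⁽ᵏ⁾(z)`, whose derivative `(z - a) ^ k * G⁽ᵏ⁺¹⁾(z)` no longer
involves the difference quotient `q`. -/
def liftedSlope (a : ℂ) (G : ℕ → ℂ → ℂ) (k : ℕ) (z : ℂ) : ℂ :=
  (z - a) ^ (k + 1) * slopeTower a G k z

lemma liftedSlope_self (a : ℂ) (G : ℕ → ℂ → ℂ) (k : ℕ) : liftedSlope a G k a = 0 := by
  simp [liftedSlope]

lemma hasDerivWithinAt_liftedSlope {n : ℕ} {G : ℕ → ℂ → ℂ} (hG : Tower n G) {a : ℂ} {k : ℕ}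
    (hk : k < n) {z : ℂ} (hz : z ∈ circleT) (hza : z ≠ a) :
    HasDerivWithinAt (liftedSlope a G k) ((z - a) ^ k * G (k + 1) z) circleT z := by
  have h1 := (((hasDerivWithinAt_id z circleT).sub_const a).pow (k + 1)).mul
    (hasDerivWithinAt_slopeTower_of_ne hG k hk z hz hza)
  have h2 : HasDerivWithinAt (liftedSlope a G k) _ circleT z := h1
  convert h2 using 1
  have e := slopeTower_mul_succ a G k z
  simp only [id, Pi.pow_apply, Nat.add_sub_cancel]
  push_cast
  linear_combination (-(z - a) ^ k) * e

lemma continuousWithinAt_liftedSlope_zero {n : ℕ} {G : ℕ → ℂ → ℂ} (hG : Tower n G) (hn : 0 < n)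
    {a : ℂ} (ha : a ∈ circleT) : ContinuousWithinAt (liftedSlope a G 0) circleT a := by
  have h : liftedSlope a G 0 = fun z => G 0 z - G 0 a := by
    ext z
    simp [liftedSlope, slopeTower_mul_zero]
  rw [h]
  exact (hG 0 hn a ha).continuousWithinAt.sub continuousWithinAt_const

lemma continuousWithinAt_liftedSlope_succ {n : ℕ} {G : ℕ → ℂ → ℂ} (hG : Tower n G) {k : ℕ}
    (hk : k + 1 < n) {a : ℂ} (ha : a ∈ circleT)
    (hq : ContinuousWithinAt (slopeTower a G k) circleT a) :
    ContinuousWithinAt (liftedSlope a G (k + 1)) circleT a := by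
  have h : liftedSlope a G (k + 1)
      = fun z => (z - a) ^ (k + 1) * (G (k + 1) z - (k + 1) * slopeTower a G k z) := by
    ext z
    rw [liftedSlope, ← slopeTower_mul_succ]
    ring
  rw [h]
  refine ContinuousWithinAt.mul (by fun_prop) (ContinuousWithinAt.sub ?_ ?_)
  · exact (hG (k + 1) hk a ha).continuousWithinAt
  · exact continuousWithinAt_const.mul hq

/-- Differentiability of the difference quotient at `a`: subtract from the lifted slope its expected
Taylor polynomial of degree `k + 2`; the derivative of the rest is `o((z - a) ^ (k + 1))`, because
`G (k + 1)` is differentiable at `a`, so the rest is `o((z - a) ^ (k + 2))` by the mean value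
inequality. Continuity of the top derivative plays no role. -/
lemma hasDerivWithinAt_slopeTower_self_of_continuous {n : ℕ} {G : ℕ → ℂ → ℂ} (hG : Tower n G)
    {k : ℕ} (hk : k + 1 < n) {a : ℂ} (ha : a ∈ circleT)
    (hc : ContinuousWithinAt (liftedSlope a G k) circleT a) :
    HasDerivWithinAt (slopeTower a G k) (slopeTower a G (k + 1) a) circleT a := by
  have hk1 : (k : ℂ) + 1 ≠ 0 := by exact_mod_cast Nat.succ_ne_zero k
  have hk2 : (k : ℂ) + 2 ≠ 0 := by exact_mod_cast (by omega : k + 2 ≠ 0)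
  have hpi := Real.pi_pos
  have hd := hG (k + 1) hk a ha
  rw [hasDerivWithinAt_iff_isLittleO, Asymptotics.isLittleO_iff] at hd ⊢
  intro c hc0
  have hd' := hd (show 0 < c / (Real.pi / 2) by positivity)
  rw [Metric.nhdsWithin_basis_ball.eventually_iff] at hd' ⊢
  obtain ⟨δ, hδ, hball⟩ := hd'
  refine ⟨δ, hδ, ?_⟩
  rintro z ⟨hzδ, hz⟩
  by_cases hza : z = a
  · simp [hza]
  have hr : 0 < ‖z - a‖ := norm_pos_iff.2 (sub_ne_zero.2 hza)
  set g1 := G (k + 1) a with hg1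
  set g2 := G (k + 1 + 1) a with hg2
  have hmvt := circle_mvt (a := a) (z := z)
    (H := fun w => liftedSlope a G k w - (w - a) ^ (k + 1) * (g1 / (k + 1))
      - (w - a) ^ (k + 2) * (g2 / (k + 2)))
    (H' := fun w => (w - a) ^ k * (G (k + 1) w - g1 - (w - a) * g2))
    (B := c / (Real.pi / 2) * ‖z - a‖ ^ (k + 1)) ha hz
    ((hc.sub (by fun_prop)).sub (by fun_prop))
    (by
      intro w hw hwa
      have h1 := hasDerivWithinAt_liftedSlope hG (by omega : k < n) hw hwa
      have h2 := (((hasDerivWithinAt_id w circleT).sub_const a).pow (k + 1)).mul_const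
        (g1 / (k + 1))
      have h3 := (((hasDerivWithinAt_id w circleT).sub_const a).pow (k + 2)).mul_const
        (g2 / (k + 2))
      refine ((h1.sub h2).sub h3).congr_deriv ?_
      simp only [id, Nat.add_sub_cancel, show k + 2 - 1 = k + 1 by omega]
      push_cast
      field_simp
      ring)
    (by
      intro w hw hwa hwz
      have hwδ : w ∈ Metric.ball a δ ∩ circleT := by
        refine ⟨?_, hw⟩
        rw [mem_ball_iff_norm] at hzδ ⊢
        exact hwz.trans_lt hzδ
      have := hball hwδ
      rw [smul_eq_mul] at this
      rw [norm_mul, norm_pow]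
      calc ‖w - a‖ ^ k * ‖G (k + 1) w - g1 - (w - a) * g2‖
          ≤ ‖w - a‖ ^ k * (c / (Real.pi / 2) * ‖w - a‖) := by gcongr
        _ = c / (Real.pi / 2) * ‖w - a‖ ^ (k + 1) := by ring
        _ ≤ _ := by gcongr)
  have hlhs : (liftedSlope a G k z - (z - a) ^ (k + 1) * (g1 / (k + 1))
      - (z - a) ^ (k + 2) * (g2 / (k + 2)))
      - (liftedSlope a G k a - (a - a) ^ (k + 1) * (g1 / (k + 1))
      - (a - a) ^ (k + 2) * (g2 / (k + 2)))
      = (z - a) ^ (k + 1) * (slopeTower a G k z - slopeTower a G k a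
        - (z - a) • slopeTower a G (k + 1) a) := by
    rw [liftedSlope_self, slopeTower_self, slopeTower_self, liftedSlope, ← hg1, ← hg2, smul_eq_mul]
    push_cast
    simp only [sub_self, ne_eq, Nat.add_eq_zero_iff, OfNat.ofNat_ne_zero, one_ne_zero, and_false,
      not_false_eq_true, zero_pow]
    have : (k : ℂ) + 1 + 1 ≠ 0 := by rw [add_assoc]; norm_num; exact hk2
    field_simp
    ring
  simp only [hlhs] at hmvt
  rw [norm_mul, norm_pow] at hmvt
  have hrk : 0 < ‖z - a‖ ^ (k + 1) := by positivity
  refine le_of_mul_le_mul_left ?_ hrk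
  calc _ ≤ _ := hmvt
    _ = _ := by field_simp

lemma hasDerivWithinAt_slopeTower_self {n : ℕ} {G : ℕ → ℂ → ℂ} (hG : Tower n G)
    {a : ℂ} (ha : a ∈ circleT) : ∀ k, k + 1 < n →
    HasDerivWithinAt (slopeTower a G k) (slopeTower a G (k + 1) a) circleT a := by
  intro k
  induction k with
  | zero =>
    intro hk
    exact hasDerivWithinAt_slopeTower_self_of_continuous hG hk ha
      (continuousWithinAt_liftedSlope_zero hG (by omega) ha)
  | succ k ih =>
    intro hk
    exact hasDerivWithinAt_slopeTower_self_of_continuous hG hk ha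
      (continuousWithinAt_liftedSlope_succ hG (by omega) ha (ih (by omega)).continuousWithinAt)

/-- Dividing by `z - a` costs exactly one order of differentiability. -/
lemma Tower.slopeTower {n : ℕ} {G : ℕ → ℂ → ℂ} (hG : Tower (n + 1) G) {a : ℂ}
    (ha : a ∈ circleT) : Tower n (slopeTower a G) := by
  intro k hk z hz
  by_cases h : z = a
  · rw [h]
    exact hasDerivWithinAt_slopeTower_self hG ha k (by omega)
  · exact hasDerivWithinAt_slopeTower_of_ne hG k (by omega) z hz h

/-- The constant is uniform in `a`; this makes the estimates on divided differences uniform in all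
the variables. -/
lemma norm_slopeTower_le {n : ℕ} {G : ℕ → ℂ → ℂ} (hG : Tower n G) {a : ℂ} (ha : a ∈ circleT)
    {k : ℕ} (hk : k < n) {S : ℝ} (hS : ∀ z ∈ circleT, ‖G (k + 1) z‖ ≤ S) {z : ℂ}
    (hz : z ∈ circleT) : ‖slopeTower a G k z‖ ≤ Real.pi / 2 * S := by
  have hS0 : 0 ≤ S := (norm_nonneg _).trans (hS z hz)
  by_cases hza : z = a
  · rw [hza, slopeTower_self, norm_div]
    have h1 : ‖(k : ℂ) + 1‖ = (k : ℝ) + 1 := by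
      rw [← Nat.cast_succ, Complex.norm_natCast, Nat.cast_succ]
    have h2 : ‖G (k + 1) a‖ / ‖(k : ℂ) + 1‖ ≤ ‖G (k + 1) a‖ := by
      rw [h1]
      exact div_le_self (norm_nonneg _) (by linarith [Nat.cast_nonneg (α := ℝ) k])
    nlinarith [hS a ha, Real.two_le_pi]
  have hr : 0 < ‖z - a‖ := norm_pos_iff.2 (sub_ne_zero.2 hza)
  have hc : ContinuousWithinAt (liftedSlope a G k) circleT a := by
    cases k with
    | zero => exact continuousWithinAt_liftedSlope_zero hG hk ha
    | succ k =>
      exact continuousWithinAt_liftedSlope_succ hG hk ha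
        (hasDerivWithinAt_slopeTower_self hG ha k hk).continuousWithinAt
  have hmvt := circle_mvt (B := ‖z - a‖ ^ k * S) ha hz hc
    (fun w hw hwa => hasDerivWithinAt_liftedSlope hG hk hw hwa)
    (fun w hw _ hwz => by
      rw [norm_mul, norm_pow]
      gcongr
      exact hS w hw)
  rw [liftedSlope_self, sub_zero, liftedSlope, norm_mul, norm_pow] at hmvt
  have hrk : 0 < ‖z - a‖ ^ (k + 1) := by positivity
  refine le_of_mul_le_mul_left ?_ hrk
  calc _ ≤ _ := hmvt
    _ = _ := by ring

lemma slopeTower_sub (a : ℂ) (G₁ G₂ : ℕ → ℂ → ℂ) (k : ℕ) (z : ℂ) :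
    slopeTower a (fun k z => G₁ k z - G₂ k z) k z = slopeTower a G₁ k z - slopeTower a G₂ k z := by
  induction k generalizing z with
  | zero =>
    simp only [slopeTower]
    split_ifs <;> ring
  | succ k ih =>
    simp only [slopeTower, ih]
    split_ifs <;> ring

lemma tendsto_slopeTower {a : ℂ} (ha : a ∈ circleT) {G : ℕ → ℕ → ℂ → ℂ} {G₀ : ℕ → ℂ → ℂ} {n : ℕ}
    (h : ∀ k ≤ n + 1, ∀ z ∈ circleT, Tendsto (fun j => G j k z) atTop (𝓝 (G₀ k z))) :
    ∀ k ≤ n, ∀ z ∈ circleT,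
      Tendsto (fun j => slopeTower a (G j) k z) atTop (𝓝 (slopeTower a G₀ k z)) := by
  intro k
  induction k with
  | zero =>
    intro hk z hz
    simp only [slopeTower]
    split_ifs
    · exact h 1 (by omega) a ha
    · exact ((h 0 (by omega) z hz).sub (h 0 (by omega) a ha)).div_const _
  | succ k ih =>
    intro hk z hz
    simp only [slopeTower]
    split_ifs
    · exact (h (k + 2) (by omega) a ha).div_const _
    · exact ((h (k + 1) (by omega) z hz).sub
        ((ih (by omega) z hz).const_mul _)).div_const _

/-! ### Divided differences as iterated difference quotients -/

/-- The derivatives of `z ↦ f^{[m]}(z, w₁, …, wₘ)`, where `G` is the tower of `f`. -/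
def divTower (G : ℕ → ℂ → ℂ) : (m : ℕ) → (Fin m → ℂ) → ℕ → ℂ → ℂ
  | 0 => fun _ => G
  | m + 1 => fun w => slopeTower (w 0) (divTower G m (fun i => w i.succ))

lemma Tower.divTower {G : ℕ → ℂ → ℂ} (m n : ℕ) (hG : Tower (n + m) G) (w : Fin m → ℂ)
    (hw : ∀ i, w i ∈ circleT) : Tower n (divTower G m w) := by
  induction m generalizing n with
  | zero => exact hG
  | succ m ih =>
    exact (ih (n + 1) (hG.mono (by omega)) _ (fun i => hw i.succ)).slopeTower (hw 0)

lemma divTower_eq_divDiff {G : ℕ → ℂ → ℂ} (m : ℕ) (hG : Tower m G) (w : Fin m → ℂ)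
    (hw : ∀ i, w i ∈ circleT) {z : ℂ} (hz : z ∈ circleT) :
    divDiff (G 0) m (Fin.cons z w) = divTower G m w 0 z := by
  induction m generalizing z with
  | zero => simp [divDiff, divTower]
  | succ m ih =>
    have hT : Tower 1 (_root_.divTower G m (fun i => w i.succ)) :=
      Tower.divTower m 1 (hG.mono (by omega)) _ (fun i => hw i.succ)
    have ih' := fun {z : ℂ} (hz : z ∈ circleT) =>
      ih (hG.mono (by omega)) (fun i => w i.succ) (fun i => hw i.succ) (z := z) hz
    have e1 : (Fin.cons z w : Fin (m + 2) → ℂ) 1 = w 0 := rfl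
    have e2 : (fun i : Fin m => (Fin.cons z w : Fin (m + 2) → ℂ) i.succ.succ)
        = fun i => w i.succ := rfl
    simp only [divDiff, divTower, slopeTower, Fin.cons_zero, e1, e2]
    split_ifs with h
    · have hd := (hT 0 (by omega) z hz).congr_of_mem (fun x hx => ih' hx) hz
      rw [hd.cderiv_eq hz, h]
    · rw [ih' hz, ih' (hw 0)]

lemma divDiff_eq_divTower {G : ℕ → ℂ → ℂ} {m : ℕ} (hG : Tower m G) {v : Fin (m + 1) → ℂ}
    (hv : ∀ i, v i ∈ circleT) :
    divDiff (G 0) m v = divTower G m (fun i => v i.succ) 0 (v 0) := by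
  rw [← divTower_eq_divDiff m hG _ (fun i => hv i.succ) (hv 0)]
  congr 1
  exact (Fin.cons_self_tail v).symm

lemma divTower_sub (G₁ G₂ : ℕ → ℂ → ℂ) (m : ℕ) (w : Fin m → ℂ) (k : ℕ) (z : ℂ) :
    divTower (fun k z => G₁ k z - G₂ k z) m w k z
      = divTower G₁ m w k z - divTower G₂ m w k z := by
  induction m generalizing k z with
  | zero => rfl
  | succ m ih =>
    have h : divTower (fun k z => G₁ k z - G₂ k z) m (fun i => w i.succ)
        = fun k z => divTower G₁ m (fun i => w i.succ) k z
          - divTower G₂ m (fun i => w i.succ) k z := by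
      ext k z
      exact ih _ k z
    simp only [divTower]
    rw [h, slopeTower_sub]

lemma norm_divTower_le {N : ℕ} {G : ℕ → ℂ → ℂ} (hG : Tower N G) {S : ℝ}
    (hS : ∀ k ≤ N, ∀ z ∈ circleT, ‖G k z‖ ≤ S) (m : ℕ) (w : Fin m → ℂ)
    (hw : ∀ i, w i ∈ circleT) :
    ∀ k, k + m ≤ N → ∀ z ∈ circleT, ‖divTower G m w k z‖ ≤ (Real.pi / 2) ^ m * S := by
  induction m with
  | zero =>
    intro k hk z hz
    simpa [divTower] using hS k (by omega) z hz
  | succ m ih =>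
    intro k hk z hz
    have hT := Tower.divTower m (k + 1) (hG.mono (by omega)) (fun i => w i.succ)
      (fun i => hw i.succ)
    have := norm_slopeTower_le hT (hw 0) (Nat.lt_succ_self k)
      (fun z hz => ih _ (fun i => hw i.succ) (k + 1) (by omega) z hz) hz
    simp only [divTower]
    rw [pow_succ']
    linarith

lemma tendsto_divTower {G : ℕ → ℕ → ℂ → ℂ} {G₀ : ℕ → ℂ → ℂ} {N : ℕ}
    (h : ∀ k ≤ N, ∀ z ∈ circleT, Tendsto (fun j => G j k z) atTop (𝓝 (G₀ k z)))
    (m n : ℕ) (hmn : n + m = N) (w : Fin m → ℂ) (hw : ∀ i, w i ∈ circleT) :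
    ∀ k ≤ n, ∀ z ∈ circleT,
      Tendsto (fun j => divTower (G j) m w k z) atTop (𝓝 (divTower G₀ m w k z)) := by
  induction m generalizing n with
  | zero => subst hmn; exact h
  | succ m ih =>
    exact tendsto_slopeTower (hw 0) (ih (n + 1) (by omega) _ (fun i => hw i.succ))

/-! ### Averages over short arcs -/

/-- `t ↦ Φ l (z e^{it}) e^{ilt}`, the `l`-th derivative of the rotated function `z ↦ Φ 0 (z e^{it})`
when `Φ` is a tower. -/
def twist (Φ : ℕ → ℂ → ℂ) (l : ℕ) (z : ℂ) (t : ℝ) : ℂ :=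
  Φ l (z * Complex.exp (t * Complex.I)) * Complex.exp (t * Complex.I) ^ l

lemma twist_zero (Φ : ℕ → ℂ → ℂ) (l : ℕ) (z : ℂ) : twist Φ l z 0 = Φ l z := by
  simp [twist]

lemma norm_twist_le {Φ : ℕ → ℂ → ℂ} {l : ℕ} {C : ℝ} (hC : ∀ z ∈ circleT, ‖Φ l z‖ ≤ C) {z : ℂ}
    (hz : z ∈ circleT) (t : ℝ) : ‖twist Φ l z t‖ ≤ C := by
  rw [twist, norm_mul, norm_pow, Complex.norm_exp_ofReal_mul_I, one_pow, mul_one]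
  exact hC _ (mul_exp_mem hz t)

lemma hasDerivAt_twist {n : ℕ} {Φ : ℕ → ℂ → ℂ} (hΦ : Tower n Φ) {l : ℕ} (hl : l < n) {z : ℂ}
    (hz : z ∈ circleT) (t : ℝ) :
    HasDerivAt (twist Φ l z) (Complex.I * (z * twist Φ (l + 1) z t + l * twist Φ l z t)) t := by
  have h1 := hasDerivAt_angle hz t (hΦ l hl _ (mul_exp_mem hz t))
  have h2 := (hasDerivAt_path 1 t Complex.I).pow l
  simp only [one_mul] at h2
  refine (h1.mul h2).congr_deriv ?_
  simp only [twist, Pi.pow_apply]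
  cases l with
  | zero => simp; ring
  | succ l =>
    simp only [Nat.add_sub_cancel]
    push_cast
    ring

lemma continuous_twist {n : ℕ} {Φ : ℕ → ℂ → ℂ} (hΦ : Tower n Φ) {l : ℕ} (hl : l < n) {z : ℂ}
    (hz : z ∈ circleT) : Continuous (twist Φ l z) :=
  continuous_iff_continuousAt.2 fun t => (hasDerivAt_twist hΦ hl hz t).continuousAt

/-- The derivatives of the average `z ↦ ε⁻¹ ∫₀^ε Φ 0 (z e^{it}) dt`. With `A` the average, the
derivative of order `l + 1` is obtained from `z A⁽ˡ⁺¹⁾(z) + l A⁽ˡ⁾(z) = (twist ε - twist 0) / (iε)`,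
so it uses only derivatives of `Φ 0` of order at most `l`. -/
def avgTower (Φ : ℕ → ℂ → ℂ) (ε : ℝ) : ℕ → ℂ → ℂ
  | 0 => fun z => (ε : ℂ)⁻¹ * ∫ t in (0 : ℝ)..ε, twist Φ 0 z t
  | l + 1 => fun z =>
      z⁻¹ * ((twist Φ l z ε - Φ l z) / (ε * Complex.I) - l * avgTower Φ ε l z)

lemma hasDerivWithinAt_avgTower_zero {n : ℕ} {Φ : ℕ → ℂ → ℂ} (hΦ : Tower n Φ) (hn : 0 < n)
    {ε : ℝ} (hε : 0 < ε) {z : ℂ} (hz : z ∈ circleT) :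
    HasDerivWithinAt (avgTower Φ ε 0) (avgTower Φ ε 1 z) circleT z := by
  have hz0 := circleT_ne_zero hz
  have hε0 : (ε : ℂ) ≠ 0 := by exact_mod_cast hε.ne'
  have hI := Complex.I_ne_zero
  apply hasDerivWithinAt_of_angle hz
  have hcont := continuous_twist hΦ hn hz
  have hint : ∀ a b : ℝ, IntervalIntegrable (twist Φ 0 z) MeasureTheory.volume a b :=
    fun a b => hcont.intervalIntegrable a b
  -- rotating the base point by `s` shifts the interval of integration by `s`
  have hshift : ∀ s : ℝ, avgTower Φ ε 0 (z * Complex.exp (s * Complex.I))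
      = (ε : ℂ)⁻¹ * ((∫ t in (0 : ℝ)..(s + ε), twist Φ 0 z t) - ∫ t in (0 : ℝ)..s, twist Φ 0 z t) := by
    intro s
    have hrot : ∀ t : ℝ, twist Φ 0 (z * Complex.exp (s * Complex.I)) t = twist Φ 0 z (s + t) := by
      intro t
      simp only [twist, pow_zero, mul_one]
      rw [mul_assoc, ← Complex.exp_add, ← add_mul]
      push_cast
      rfl
    have h1 := intervalIntegral.integral_comp_add_left (a := 0) (b := ε) (twist Φ 0 z) s
    rw [add_zero] at h1
    rw [intervalIntegral.integral_interval_sub_left (hint _ _) (hint _ _), ← h1]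
    simp only [avgTower, hrot]
  simp only [hshift]
  have hd1 : HasDerivAt (fun s : ℝ => ∫ t in (0 : ℝ)..(s + ε), twist Φ 0 z t)
      (twist Φ 0 z (0 + ε)) 0 :=
    (hcont.integral_hasStrictDerivAt 0 (0 + ε)).hasDerivAt.comp_add_const 0 ε
  have hd2 : HasDerivAt (fun s : ℝ => ∫ t in (0 : ℝ)..s, twist Φ 0 z t) (twist Φ 0 z 0) 0 :=
    (hcont.integral_hasStrictDerivAt 0 0).hasDerivAt
  refine ((hd1.sub hd2).const_mul _).congr_deriv ?_
  rw [twist_zero, zero_add, avgTower]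
  simp only [Nat.cast_zero, zero_mul, sub_zero]
  field_simp

lemma hasDerivWithinAt_twist_left {n : ℕ} {Φ : ℕ → ℂ → ℂ} (hΦ : Tower n Φ) {l : ℕ} (hl : l < n)
    {z : ℂ} (hz : z ∈ circleT) (t : ℝ) :
    HasDerivWithinAt (fun w => twist Φ l w t) (twist Φ (l + 1) z t) circleT z := by
  have h1 := HasDerivWithinAt.comp z (hΦ l hl _ (mul_exp_mem hz t))
    ((hasDerivWithinAt_id z circleT).mul_const (Complex.exp (t * Complex.I)))
    (fun w hw => mul_exp_mem hw t)
  refine (h1.mul_const (Complex.exp (t * Complex.I) ^ l)).congr_deriv ?_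
  rw [twist, id]
  ring

lemma tower_avgTower {n : ℕ} {Φ : ℕ → ℂ → ℂ} (hΦ : Tower n Φ) {ε : ℝ} (hε : 0 < ε) :
    Tower n (avgTower Φ ε) := by
  intro k
  induction k with
  | zero => intro hk z hz; exact hasDerivWithinAt_avgTower_zero hΦ hk hε hz
  | succ k ih =>
    intro hk z hz
    have hz0 := circleT_ne_zero hz
    have hε0 : (ε : ℂ) ≠ 0 := by exact_mod_cast hε.ne'
    have hI := Complex.I_ne_zero
    have h1 := (((hasDerivWithinAt_twist_left hΦ (by omega : k < n) hz ε).sub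
      (hΦ k (by omega) z hz)).div_const (ε * Complex.I)).sub
      ((ih (by omega) z hz).const_mul (k : ℂ))
    have h2 := (hasDerivWithinAt_inv hz0 circleT).mul h1
    refine h2.congr_deriv ?_
    have e : z * avgTower Φ ε (k + 1) z
        = (twist Φ k z ε - Φ k z) / (ε * Complex.I) - k * avgTower Φ ε k z := by
      rw [avgTower]
      field_simp
    have e2 : avgTower Φ ε (k + 1 + 1) z
        = z⁻¹ * ((twist Φ (k + 1) z ε - Φ (k + 1) z) / (ε * Complex.I)
          - ((k + 1 : ℕ) : ℂ) * avgTower Φ ε (k + 1) z) := rfl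
    simp only [Pi.sub_apply]
    rw [e2, ← e]
    push_cast
    field_simp
    ring

lemma continuousOn_avgTower {n : ℕ} {Φ : ℕ → ℂ → ℂ} (hΦ : Tower n Φ) {ε : ℝ} (hε : 0 < ε)
    (hn : 1 ≤ n) : ContinuousOn (avgTower Φ ε n) circleT := by
  obtain ⟨k, rfl⟩ : ∃ k, n = k + 1 := ⟨n - 1, by omega⟩
  intro z hz
  have hz0 := circleT_ne_zero hz
  have h1 := (hasDerivWithinAt_twist_left hΦ (Nat.lt_succ_self k) hz ε).continuousWithinAt
  have h2 := (hΦ k (Nat.lt_succ_self k) z hz).continuousWithinAt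
  have h3 := (tower_avgTower hΦ hε k (Nat.lt_succ_self k) z hz).continuousWithinAt
  exact (continuousWithinAt_id.inv₀ hz0).mul
    (((h1.sub h2).div_const _).sub (continuousWithinAt_const.mul h3))

lemma norm_twist_sub_le {n : ℕ} {Φ : ℕ → ℂ → ℂ} (hΦ : Tower n Φ) {C : ℝ}
    (hC : ∀ k ≤ n, ∀ z ∈ circleT, ‖Φ k z‖ ≤ C) {l : ℕ} (hl : l < n) {z : ℂ} (hz : z ∈ circleT)
    {t : ℝ} (ht : 0 ≤ t) : ‖twist Φ l z t - Φ l z‖ ≤ (l + 1) * C * t := by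
  have hz1 : ‖z‖ = 1 := hz
  have := norm_image_sub_le_of_norm_deriv_right_le_segment (a := 0) (b := t) (C := (l + 1) * C)
    (continuous_twist hΦ hl hz).continuousOn
    (fun s _ => (hasDerivAt_twist hΦ hl hz s).hasDerivWithinAt)
    (fun s _ => by
      rw [norm_mul, Complex.norm_I, one_mul]
      calc _ ≤ ‖z * twist Φ (l + 1) z s‖ + ‖(l : ℂ) * twist Φ l z s‖ := norm_add_le _ _
        _ ≤ C + l * C := by
          rw [norm_mul, norm_mul, hz1, one_mul, Complex.norm_natCast]
          gcongr
          · exact norm_twist_le (hC (l + 1) hl) hz s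
          · exact norm_twist_le (hC l hl.le) hz s
        _ = _ := by ring)
    t ⟨ht, le_rfl⟩
  rwa [twist_zero, sub_zero] at this

/-- Second-order Taylor estimate for `twist`, uniform in the base point. -/
lemma norm_twist_taylor_le {n : ℕ} {Φ : ℕ → ℂ → ℂ} (hΦ : Tower n Φ) {C : ℝ}
    (hC : ∀ k ≤ n, ∀ z ∈ circleT, ‖Φ k z‖ ≤ C) {l : ℕ} (hl : l + 1 < n) {z : ℂ}
    (hz : z ∈ circleT) {ε : ℝ} (hε : 0 < ε) :
    ‖twist Φ l z ε - Φ l z - ε * (Complex.I * (z * Φ (l + 1) z + l * Φ l z))‖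
      ≤ (l + 1) * (l + 2) * C * ε * ε := by
  have hz1 : ‖z‖ = 1 := hz
  have hC0 : 0 ≤ C := (norm_nonneg _).trans (hC 0 (by omega) z hz)
  set D := Complex.I * (z * Φ (l + 1) z + l * Φ l z) with hD
  have hd : ∀ s : ℝ, HasDerivAt (fun t : ℝ => twist Φ l z t - t * D)
      (Complex.I * (z * (twist Φ (l + 1) z s - Φ (l + 1) z) + l * (twist Φ l z s - Φ l z))) s := by
    intro s
    have h1 : HasDerivAt (fun t : ℝ => (t : ℂ) * D) (1 * D) s :=
      (hasDerivAt_id (s : ℂ)).comp_ofReal.mul_const D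
    refine ((hasDerivAt_twist hΦ (by omega : l < n) hz s).sub h1).congr_deriv ?_
    rw [hD]; ring
  have := norm_image_sub_le_of_norm_deriv_right_le_segment (a := 0) (b := ε)
    (C := (l + 1) * (l + 2) * C * ε)
    (continuous_iff_continuousAt.2 fun s => (hd s).continuousAt).continuousOn
    (fun s _ => (hd s).hasDerivWithinAt)
    (fun s hs => by
      have h1 := norm_twist_sub_le hΦ hC hl hz hs.1
      have h2 := norm_twist_sub_le hΦ hC (by omega : l < n) hz hs.1
      push_cast at h1
      rw [norm_mul, Complex.norm_I, one_mul]
      calc _ ≤ ‖z * (twist Φ (l + 1) z s - Φ (l + 1) z)‖ + ‖(l : ℂ) * (twist Φ l z s - Φ l z)‖ :=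
            norm_add_le _ _
        _ ≤ (l + 1 + 1) * C * s + l * ((l + 1) * C * s) := by
          rw [norm_mul, norm_mul, hz1, one_mul, Complex.norm_natCast]
          gcongr
        _ ≤ (l + 1) * (l + 2) * C * s := by
          have : 0 ≤ (l : ℝ) * (C * s) := mul_nonneg (Nat.cast_nonneg l) (mul_nonneg hC0 hs.1)
          nlinarith
        _ ≤ _ := by
          have := hs.2.le
          gcongr)
    ε ⟨hε.le, le_rfl⟩
  simp only [twist_zero, sub_zero, Complex.ofReal_zero, zero_mul] at this
  rwa [sub_right_comm] at this

/-- Below the top order the averages converge uniformly, at rate `O(ε)`. -/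
lemma exists_norm_avgTower_sub_le {n : ℕ} {Φ : ℕ → ℂ → ℂ} (hΦ : Tower n Φ) {C : ℝ}
    (hC : ∀ k ≤ n, ∀ z ∈ circleT, ‖Φ k z‖ ≤ C) (l : ℕ) (hl : l < n) :
    ∃ K : ℝ, ∀ ε : ℝ, 0 < ε → ∀ z ∈ circleT, ‖avgTower Φ ε l z - Φ l z‖ ≤ K * ε := by
  induction l with
  | zero =>
    refine ⟨C, fun ε hε z hz => ?_⟩
    have hε0 : (ε : ℂ) ≠ 0 := by exact_mod_cast hε.ne'
    have hC0 : 0 ≤ C := (norm_nonneg _).trans (hC 0 (by omega) z hz)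
    have h1 : avgTower Φ ε 0 z - Φ 0 z
        = (ε : ℂ)⁻¹ * ∫ t in (0 : ℝ)..ε, (twist Φ 0 z t - Φ 0 z) := by
      rw [intervalIntegral.integral_sub ((continuous_twist hΦ hl hz).intervalIntegrable _ _)
        (by simp), intervalIntegral.integral_const, avgTower, mul_sub, sub_zero,
        Complex.real_smul, inv_mul_cancel_left₀ hε0]
    have h2 := intervalIntegral.norm_integral_le_of_norm_le_const (a := 0) (b := ε) (C := C * ε)
      (f := fun t => twist Φ 0 z t - Φ 0 z) (by
        intro t ht
        rw [Set.uIoc_of_le hε.le] at ht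
        have := norm_twist_sub_le hΦ hC hl hz ht.1.le
        simp only [Nat.cast_zero, zero_add, one_mul] at this
        exact this.trans (by gcongr; exact ht.2))
    rw [h1, norm_mul, norm_inv, Complex.norm_real, Real.norm_eq_abs, abs_of_pos hε]
    rw [sub_zero, abs_of_pos hε] at h2
    calc _ ≤ ε⁻¹ * (C * ε * ε) := by gcongr
      _ = _ := by field_simp
  | succ l ih =>
    obtain ⟨K, hK⟩ := ih (by omega)
    refine ⟨(l + 1) * (l + 2) * C + l * K, fun ε hε z hz => ?_⟩
    have hz1 : ‖z‖ = 1 := hz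
    have hz0 := circleT_ne_zero hz
    have hε0 : (ε : ℂ) ≠ 0 := by exact_mod_cast hε.ne'
    have hI := Complex.I_ne_zero
    have h1 := norm_twist_taylor_le hΦ hC hl hz hε
    have h2 := hK ε hε z hz
    have e : avgTower Φ ε (l + 1) z - Φ (l + 1) z
        = z⁻¹ * ((twist Φ l z ε - Φ l z - ε * (Complex.I * (z * Φ (l + 1) z + l * Φ l z)))
          / (ε * Complex.I) - l * (avgTower Φ ε l z - Φ l z)) := by
      rw [avgTower]
      field_simp
      ring
    rw [e, norm_mul, norm_inv, hz1, inv_one, one_mul]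
    refine (norm_sub_le _ _).trans ?_
    rw [norm_div, norm_mul, norm_mul, Complex.norm_I, mul_one, Complex.norm_real,
      Real.norm_eq_abs, abs_of_pos hε, Complex.norm_natCast, add_mul, mul_assoc (l : ℝ)]
    gcongr
    rw [div_le_iff₀ hε]
    exact h1

/-- The averages are bounded together with all derivatives, the top one included. -/
lemma exists_norm_avgTower_le {n : ℕ} {Φ : ℕ → ℂ → ℂ} (hΦ : Tower n Φ) {C : ℝ}
    (hC : ∀ k ≤ n, ∀ z ∈ circleT, ‖Φ k z‖ ≤ C) (l : ℕ) (hl : l < n) :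
    ∃ K : ℝ, ∀ ε : ℝ, 0 < ε → ε ≤ 1 → ∀ z ∈ circleT, ‖avgTower Φ ε (l + 1) z‖ ≤ K := by
  obtain ⟨K, hK⟩ := exists_norm_avgTower_sub_le hΦ hC l hl
  refine ⟨(l + 1) * C + l * (|K| + C), fun ε hε hε1 z hz => ?_⟩
  have hz1 : ‖z‖ = 1 := hz
  have h1 := norm_twist_sub_le hΦ hC hl hz hε.le
  have h2 : ‖avgTower Φ ε l z‖ ≤ |K| + C := by
    calc ‖avgTower Φ ε l z‖ = ‖(avgTower Φ ε l z - Φ l z) + Φ l z‖ := by rw [sub_add_cancel]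
      _ ≤ ‖avgTower Φ ε l z - Φ l z‖ + ‖Φ l z‖ := norm_add_le _ _
      _ ≤ |K| + C := by
        gcongr
        · calc _ ≤ K * ε := hK ε hε z hz
            _ ≤ |K| * 1 := mul_le_mul (le_abs_self K) hε1 hε.le (abs_nonneg K)
            _ = |K| := mul_one _
        · exact hC l hl.le z hz
  rw [avgTower, norm_mul, norm_inv, hz1, inv_one, one_mul]
  refine (norm_sub_le _ _).trans ?_
  rw [norm_div, norm_mul, norm_mul, Complex.norm_I, mul_one, Complex.norm_real,
    Real.norm_eq_abs, abs_of_pos hε, Complex.norm_natCast]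
  gcongr
  rw [div_le_iff₀ hε]
  exact h1

/-- At every order the averages converge pointwise: the derivative of order `l + 1` of an average is
built from a difference quotient of `Φ l`, which converges wherever `Φ l` is differentiable. -/
lemma tendsto_avgTower_succ {n : ℕ} {Φ : ℕ → ℂ → ℂ} (hΦ : Tower n Φ) {l : ℕ} (hl : l < n)
    {z : ℂ} (hz : z ∈ circleT) {u : ℕ → ℝ} (hu : Tendsto u atTop (𝓝[≠] 0))
    (h : Tendsto (fun j => avgTower Φ (u j) l z) atTop (𝓝 (Φ l z))) :
    Tendsto (fun j => avgTower Φ (u j) (l + 1) z) atTop (𝓝 (Φ (l + 1) z)) := by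
  have hz0 := circleT_ne_zero hz
  have hI := Complex.I_ne_zero
  have hd := hasDerivAt_twist hΦ hl hz 0
  rw [hasDerivAt_iff_tendsto_slope] at hd
  have h1 := ((((hd.comp hu).div_const Complex.I).sub (h.const_mul (l : ℂ))).const_mul z⁻¹)
  have hlim : z⁻¹ * (Complex.I * (z * twist Φ (l + 1) z 0 + l * twist Φ l z 0) / Complex.I
      - l * Φ l z) = Φ (l + 1) z := by
    rw [twist_zero, twist_zero]
    field_simp
    ring
  rw [hlim] at h1
  refine h1.congr fun j => ?_
  simp only [Function.comp, slope_def_module, twist_zero, sub_zero, Complex.real_smul, avgTower]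
  push_cast
  rw [div_mul_eq_div_div, inv_mul_eq_div (u j : ℂ)]

/-! ### Conclusion -/

lemma exists_common_bound {p : ℕ → ℝ → Prop} (hp : ∀ k a b, a ≤ b → p k a → p k b) (n : ℕ)
    (h : ∀ k < n, ∃ C, p k C) : ∃ C, ∀ k < n, p k C := by
  induction n with
  | zero => exact ⟨0, fun k hk => absurd hk (Nat.not_lt_zero k)⟩
  | succ n ih =>
    obtain ⟨C₁, h₁⟩ := ih fun k hk => h k (by omega)
    obtain ⟨C₂, h₂⟩ := h n (Nat.lt_succ_self n)
    refine ⟨max C₁ C₂, fun k hk => ?_⟩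
    rcases Nat.lt_succ_iff_lt_or_eq.1 hk with hk | rfl
    · exact hp _ _ _ (le_max_left _ _) (h₁ k hk)
    · exact hp _ _ _ (le_max_right _ _) h₂

lemma Tower.exists_bound {n : ℕ} {Φ : ℕ → ℂ → ℂ} (hΦ : Tower n Φ)
    (hbd : ∃ C : ℝ, ∀ z ∈ circleT, ‖Φ n z‖ ≤ C) :
    ∃ C : ℝ, ∀ k ≤ n, ∀ z ∈ circleT, ‖Φ k z‖ ≤ C := by
  obtain ⟨C, hC⟩ := exists_common_bound (p := fun k C => ∀ z ∈ circleT, ‖Φ k z‖ ≤ C)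
    (fun k a b hab h z hz => (h z hz).trans hab) (n + 1) (by
      intro k hk
      rcases Nat.lt_succ_iff_lt_or_eq.1 hk with hk | rfl
      · exact circleT_compact.exists_bound_of_continuousOn
          fun z hz => (hΦ k hk z hz).continuousWithinAt
      · exact hbd)
  exact ⟨C, fun k hk => hC k (Nat.lt_succ_of_le hk)⟩

theorem stmt1 (n : ℕ) (hn : 1 ≤ n) (f : ℂ → ℂ) (hf : CircleDiffOn n f)
    (hbd : ∃ C : ℝ, ∀ z ∈ circleT, ‖cderiv^[n] f z‖ ≤ C) :
    ∃ (F : ℕ → ℂ → ℂ) (M : ℝ), 0 < M ∧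
      (∀ j, CircleDiffOn n (F j) ∧ ContinuousOn (cderiv^[n] (F j)) circleT) ∧
      (∀ k, 1 ≤ k → k < n →
        TendstoUniformlyOn (fun j v => divDiff (F j) k v) (divDiff f k) atTop
          {v : Fin (k + 1) → ℂ | ∀ i, v i ∈ circleT}) ∧
      (∀ v : Fin (n + 1) → ℂ, (∀ i, v i ∈ circleT) →
        Tendsto (fun j => divDiff (F j) n v) atTop (𝓝 (divDiff f n v))) ∧
      (∀ k, 1 ≤ k → k ≤ n → ∀ j, ∀ z ∈ circleT, ‖cderiv^[k] (F j) z‖ ≤ M) := by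
  set Φ : ℕ → ℂ → ℂ := fun k => cderiv^[k] f with hΦdef
  have hf0 : f = Φ 0 := rfl
  have hΦ : Tower n Φ := hf.tower
  obtain ⟨C, hC⟩ := hΦ.exists_bound hbd
  obtain ⟨K, hK⟩ := exists_common_bound
    (p := fun l K => ∀ ε : ℝ, 0 < ε → ∀ z ∈ circleT, ‖avgTower Φ ε l z - Φ l z‖ ≤ K * ε)
    (fun l a b hab h ε hε z hz => (h ε hε z hz).trans (by gcongr)) n
    (exists_norm_avgTower_sub_le hΦ hC)
  obtain ⟨M, hM⟩ := exists_common_bound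
    (p := fun l K => ∀ ε : ℝ, 0 < ε → ε ≤ 1 → ∀ z ∈ circleT, ‖avgTower Φ ε (l + 1) z‖ ≤ K)
    (fun l a b hab h ε hε hε1 z hz => (h ε hε hε1 z hz).trans hab) n
    (exists_norm_avgTower_le hΦ hC)
  set u : ℕ → ℝ := fun j => 1 / ((j : ℝ) + 1) with hu
  have hu0 : ∀ j, 0 < u j := fun j => Nat.one_div_pos_of_nat
  have hu1 : ∀ j, u j ≤ 1 := fun j =>
    (div_le_one (Nat.cast_add_one_pos j)).2 (by linarith [Nat.cast_nonneg (α := ℝ) j])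
  have hulim : Tendsto u atTop (𝓝 0) := tendsto_one_div_add_atTop_nhds_zero_nat
  have hulim' : Tendsto u atTop (𝓝[≠] 0) :=
    tendsto_nhdsWithin_iff.2 ⟨hulim, Eventually.of_forall fun j => (hu0 j).ne'⟩
  have hA : ∀ j, Tower n (avgTower Φ (u j)) := fun j => tower_avgTower hΦ (hu0 j)
  have hlim : ∀ k < n, ∀ z ∈ circleT,
      Tendsto (fun j => avgTower Φ (u j) k z) atTop (𝓝 (Φ k z)) := by
    intro k hk z hz
    rw [tendsto_iff_norm_sub_tendsto_zero]
    exact squeeze_zero (fun j => norm_nonneg _) (fun j => hK k hk (u j) (hu0 j) z hz)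
      (by simpa using hulim.const_mul K)
  have hlim' : ∀ k ≤ n, ∀ z ∈ circleT,
      Tendsto (fun j => avgTower Φ (u j) k z) atTop (𝓝 (Φ k z)) := by
    intro k hk z hz
    cases k with
    | zero => exact hlim 0 hn z hz
    | succ k => exact tendsto_avgTower_succ hΦ hk hz hulim' (hlim k hk z hz)
  refine ⟨fun j => avgTower Φ (u j) 0, max M 1, by positivity, fun j => ⟨(hA j).circleDiffOn, ?_⟩,
    ?_, ?_, ?_⟩
  · exact (continuousOn_avgTower hΦ (hu0 j) hn).congr ((hA j).iterate_cderiv n le_rfl)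
  · intro k _ hk
    rw [Metric.tendstoUniformlyOn_iff]
    intro δ hδ
    have hsmall : Tendsto (fun j => (Real.pi / 2) ^ k * (K * u j)) atTop (𝓝 0) := by
      simpa using (hulim.const_mul K).const_mul ((Real.pi / 2) ^ k)
    filter_upwards [hsmall.eventually_lt_const hδ] with j hj v hv
    refine lt_of_le_of_lt ?_ hj
    rw [dist_comm, dist_eq_norm, hf0, divDiff_eq_divTower ((hA j).mono hk.le) hv,
      divDiff_eq_divTower (hΦ.mono hk.le) hv, ← divTower_sub]
    exact norm_divTower_le (((hA j).sub hΦ).mono hk.le)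
      (fun l hl z hz => hK l (hl.trans_lt hk) (u j) (hu0 j) z hz) k _ (fun i => hv i.succ) 0
      (by omega) _ (hv 0)
  · intro v hv
    simp only [divDiff_eq_divTower (hA _) hv]
    rw [hf0, divDiff_eq_divTower hΦ hv]
    exact tendsto_divTower hlim' n 0 (by omega) _ (fun i => hv i.succ) 0 le_rfl _ (hv 0)
  · intro k hk1 hk j z hz
    obtain ⟨l, rfl⟩ : ∃ l, k = l + 1 := ⟨k - 1, by omega⟩
    rw [(hA j).iterate_cderiv (l + 1) hk z hz]
    exact (hM l hk (u j) (hu0 j) (hu1 j) z hz).trans (le_max_left _ _)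
end
end

section
/- Let n ≥ 1 and let h : ℝ → ℂ be 2π-periodic and n-times differentiable with h^{(n)} bounded on ℝ. For j ≥ 1 define h_j(t) := j ∫₀^t (h(u + 1/j) − h(u)) du + h(0). Then: (1) each h_j is 2π-periodic and n-times continuously differentiable on ℝ, with h_j^{(k)}(t) = j (h^{(k−1)}(t + 1/j) − h^{(k−1)}(t)) for every 1 ≤ k ≤ n and t ∈ ℝ; (2) |h_j^{(k)}(t)| ≤ sup_{ℝ} |h^{(k)}| for every 1 ≤ k ≤ n, j ≥ 1 and t ∈ ℝ; (3) for every 1 ≤ k ≤ n−1, h_j^{(k)} converges to h^{(k)} uniformly on ℝ as j → ∞; (4) h_j^{(n)} converges to h^{(n)} pointwise on ℝ as j → ∞. -/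
/- STATEMENT 3: Steklov-type smoothing h_j(t) = j ∫₀^t (h(u+1/j) − h(u)) du + h(0)
of a 2π-periodic n-times differentiable function h with bounded n-th derivative:
each h_j is 2π-periodic and C^n, with h_j^{(k)}(t) = j(h^{(k−1)}(t+1/j) − h^{(k−1)}(t)),
uniformly bounded derivatives, uniform convergence of derivatives of order < n,
and pointwise convergence of the n-th derivatives. -/

open Filter Topology
open scoped Classical

noncomputable section

/-- The smoothing `h_j(t) = j ∫₀^t (h(u+1/j) − h(u)) du + h(0)`. -/
def smoothing (h : ℝ → ℂ) (j : ℕ) (t : ℝ) : ℂ :=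
  (j : ℂ) * (∫ u in (0:ℝ)..t, (h (u + 1 / (j : ℝ)) - h u)) + h 0

/-! The first derivative of `h_j` is, by the fundamental theorem of calculus, the scaled forward
difference `t ↦ j (h (t + 1/j) - h t)`; forward differences commute with `deriv`, so the same formula
gives all derivatives up to order `n` (`iterate_deriv_smoothing`). Every `h^(k)` with `k ≤ n` is bounded:
for `k < n` it is continuous and periodic. The mean value inequality then bounds the difference
quotients of `h^(k-1)` by the supremum of `|h^(k)|`, and, applied to `s ↦ h^(k-1) s - s h^(k) t`, shows
that they are within `M / j` of `h^(k) t`, where `M` bounds `h^(k+1)`; this is the uniform convergence for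
`k < n`. For `k = n`, pointwise convergence is the definition of the derivative of `h^(n-1)`. -/

/-- For `j = 0` this reads `0 = 0`: the junk value `1 / 0 = 0` is harmless here. -/
lemma hasDerivAt_smoothing {h : ℝ → ℂ} (hc : Continuous h) (j : ℕ) (t : ℝ) :
    HasDerivAt (smoothing h j) ((j : ℂ) * (h (t + 1 / (j : ℝ)) - h t)) t := by
  have hcont : Continuous fun u : ℝ => h (u + 1 / (j : ℝ)) - h u := by fun_prop
  exact ((hcont.integral_hasStrictDerivAt 0 t).hasDerivAt.const_mul (j : ℂ)).add_const (h 0)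

lemma iterate_deriv_smoothing {n : ℕ} {h : ℝ → ℂ}
    (hdiff : ∀ k < n, Differentiable ℝ (deriv^[k] h)) (j k : ℕ) (hk : k < n) :
    deriv^[k + 1] (smoothing h j)
      = fun t => (j : ℂ) * (deriv^[k] h (t + 1 / (j : ℝ)) - deriv^[k] h t) := by
  induction k with
  | zero =>
    funext t
    exact (hasDerivAt_smoothing (hdiff 0 hk).continuous j t).deriv
  | succ k ih =>
    rw [Function.iterate_succ_apply', ih (by omega)]
    funext t
    have hd := hdiff k (by omega)
    rw [Function.iterate_succ_apply']
    exact ((((hd _).hasDerivAt.comp_add_const t (1 / (j : ℝ))).sub (hd t).hasDerivAt).const_mul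
      (j : ℂ)).deriv

lemma periodic_iterate_deriv {h : ℝ → ℂ} {c : ℝ} (hper : ∀ t, h (t + c) = h t) (k : ℕ) :
    Function.Periodic (deriv^[k] h) c := by
  induction k with
  | zero => exact hper
  | succ k ih =>
    intro t
    rw [Function.iterate_succ_apply', ← deriv_comp_add_const]
    congr 1
    exact funext ih

lemma bddAbove_iterate_deriv {n : ℕ} {h : ℝ → ℂ}
    (hper : ∀ t, h (t + 2 * Real.pi) = h t)
    (hdiff : ∀ k < n, Differentiable ℝ (deriv^[k] h))
    (hbd : ∃ C : ℝ, ∀ t, ‖deriv^[n] h t‖ ≤ C) (k : ℕ) (hk : k ≤ n) :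
    BddAbove (Set.range fun s : ℝ => ‖deriv^[k] h s‖) := by
  rcases hk.lt_or_eq with hk | rfl
  · have hp : Function.Periodic (fun s : ℝ => ‖deriv^[k] h s‖) (2 * Real.pi) := fun t => by
      simp only [periodic_iterate_deriv hper k t]
    exact (hp.compact_of_continuous Real.two_pi_pos.ne' (hdiff k hk).continuous.norm).bddAbove
  · obtain ⟨C, hC⟩ := hbd
    exact ⟨C, by rintro _ ⟨t, rfl⟩; exact hC t⟩

lemma smoothing_add_two_pi {h : ℝ → ℂ} (hc : Continuous h)
    (hper : ∀ t, h (t + 2 * Real.pi) = h t) (j : ℕ) (t : ℝ) :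
    smoothing h j (t + 2 * Real.pi) = smoothing h j t := by
  have hcs : Continuous fun u : ℝ => h (u + 1 / (j : ℝ)) := by fun_prop
  have hint : ∀ a b : ℝ, IntervalIntegrable (fun u : ℝ => h (u + 1 / (j : ℝ)) - h u)
      MeasureTheory.volume a b := (hcs.sub hc).intervalIntegrable
  -- The integral of `h` over a full period does not depend on where the period starts.
  have hzero : ∫ u in t..(t + 2 * Real.pi), (h (u + 1 / (j : ℝ)) - h u) = 0 := by
    rw [intervalIntegral.integral_sub (hcs.intervalIntegrable _ _) (hc.intervalIntegrable _ _),
      intervalIntegral.integral_comp_add_right (fun u => h u), add_right_comm,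
      Function.Periodic.intervalIntegral_add_eq hper (t + 1 / (j : ℝ)) t, sub_self]
  unfold smoothing
  rw [← intervalIntegral.integral_add_adjacent_intervals (hint 0 t) (hint t _), hzero, add_zero]

lemma norm_forward_difference_le {g : ℝ → ℂ} (hg : Differentiable ℝ g) {M : ℝ}
    (hM : ∀ s, ‖deriv g s‖ ≤ M) {j : ℕ} (hj : 1 ≤ j) (t : ℝ) :
    ‖(j : ℂ) * (g (t + 1 / (j : ℝ)) - g t)‖ ≤ M := by
  have hj0 : (0 : ℝ) < j := by exact_mod_cast hj
  have hmv := convex_univ.norm_image_sub_le_of_norm_deriv_le (f := g) (fun x _ => hg x)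
    (fun x _ => hM x) (Set.mem_univ t) (Set.mem_univ (t + 1 / (j : ℝ)))
  rw [add_sub_cancel_left, Real.norm_of_nonneg (by positivity)] at hmv
  rw [norm_mul, Complex.norm_natCast]
  calc (j : ℝ) * ‖g (t + 1 / (j : ℝ)) - g t‖ ≤ j * (M * (1 / j)) := by gcongr
    _ = M := by field_simp

/-- Quantitative form of the convergence of difference quotients of a function whose derivative is
differentiable with bounded derivative. -/
lemma norm_forward_difference_sub_deriv_le {g : ℝ → ℂ} (hg : Differentiable ℝ g)
    (hg' : Differentiable ℝ (deriv g)) {M : ℝ} (hM : ∀ s, ‖deriv (deriv g) s‖ ≤ M)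
    {j : ℕ} (hj : 1 ≤ j) (t : ℝ) :
    ‖(j : ℂ) * (g (t + 1 / (j : ℝ)) - g t) - deriv g t‖ ≤ M / j := by
  have hj0 : (0 : ℝ) < j := by exact_mod_cast hj
  have hM0 : 0 ≤ M := (norm_nonneg _).trans (hM t)
  have hδ : (0 : ℝ) ≤ 1 / j := by positivity
  -- The mean value inequality for `s ↦ g s - s • g' t`, whose derivative `g' s - g' t` is at most
  -- `M / j` on `[t, t + 1 / j]`.
  have hmv := (convex_Icc t (t + 1 / (j : ℝ))).norm_image_sub_le_of_norm_hasDerivWithin_le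
    (f := fun s : ℝ => g s - s • deriv g t) (f' := fun s => deriv g s - deriv g t)
    (C := M * (1 / j)) (x := t) (y := t + 1 / (j : ℝ))
    (fun x _ => by
      have hx := (hg x).hasDerivAt.sub ((hasDerivAt_id x).smul_const (deriv g t))
      rw [one_smul] at hx
      exact hx.hasDerivWithinAt)
    (fun x hx => by
      refine (convex_univ.norm_image_sub_le_of_norm_deriv_le (f := deriv g) (fun x _ => hg' x)
        (fun x _ => hM x) (Set.mem_univ t) (Set.mem_univ x)).trans ?_
      rw [Real.norm_of_nonneg (by linarith [hx.1])]
      gcongr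
      linarith [hx.2])
    (Set.left_mem_Icc.2 (by linarith)) (Set.right_mem_Icc.2 (by linarith))
  rw [add_sub_cancel_left, Real.norm_of_nonneg hδ] at hmv
  have hjc : (j : ℂ) ≠ 0 := by exact_mod_cast hj0.ne'
  have hid : (j : ℂ) * (g (t + 1 / (j : ℝ)) - g t) - deriv g t
      = (j : ℂ) * ((g (t + 1 / (j : ℝ)) - (t + 1 / (j : ℝ)) • deriv g t)
        - (g t - t • deriv g t)) := by
    simp only [Complex.real_smul]
    push_cast
    field_simp
    ring
  rw [hid, norm_mul, Complex.norm_natCast]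
  refine (mul_le_mul_of_nonneg_left hmv hj0.le).trans_eq ?_
  field_simp

lemma tendsto_forward_difference {g : ℝ → ℂ} {t : ℝ} (hg : DifferentiableAt ℝ g t) :
    Tendsto (fun j : ℕ => (j : ℂ) * (g (t + 1 / (j : ℝ)) - g t)) atTop (𝓝 (deriv g t)) := by
  have hseq : Tendsto (fun j : ℕ => 1 / (j : ℝ)) atTop (𝓝[≠] 0) := by
    refine tendsto_nhdsWithin_iff.2 ⟨tendsto_one_div_atTop_nhds_zero_nat, ?_⟩
    filter_upwards [eventually_ge_atTop 1] with j hj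
    have hj0 : (0 : ℝ) < j := by exact_mod_cast hj
    exact (one_div_pos.2 hj0).ne'
  refine ((hasDerivAt_iff_tendsto_slope_zero.1 hg.hasDerivAt).comp hseq).congr fun j => ?_
  simp

theorem stmt3 (n : ℕ) (hn : 1 ≤ n) (h : ℝ → ℂ)
    (hper : ∀ t, h (t + 2 * Real.pi) = h t)
    (hdiff : ∀ k < n, Differentiable ℝ (deriv^[k] h))
    (hbd : ∃ C : ℝ, ∀ t, ‖deriv^[n] h t‖ ≤ C) :
    (∀ j : ℕ, 1 ≤ j →
      (∀ t, smoothing h j (t + 2 * Real.pi) = smoothing h j t) ∧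
      ContDiff ℝ n (smoothing h j) ∧
      (∀ k, 1 ≤ k → k ≤ n → ∀ t,
        deriv^[k] (smoothing h j) t
          = (j : ℂ) * (deriv^[k - 1] h (t + 1 / (j : ℝ)) - deriv^[k - 1] h t))) ∧
    (∀ k, 1 ≤ k → k ≤ n → ∀ j : ℕ, 1 ≤ j → ∀ t,
      ‖deriv^[k] (smoothing h j) t‖ ≤ ⨆ s : ℝ, ‖deriv^[k] h s‖) ∧
    (∀ k, 1 ≤ k → k < n →
      TendstoUniformly (fun j : ℕ => deriv^[k] (smoothing h j)) (deriv^[k] h) atTop) ∧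
    (∀ t, Tendsto (fun j : ℕ => deriv^[n] (smoothing h j) t) atTop (𝓝 (deriv^[n] h t))) := by
  have hc : Continuous h := (hdiff 0 (by omega)).continuous
  have hform := iterate_deriv_smoothing hdiff
  have hbdd := bddAbove_iterate_deriv hper hdiff hbd
  refine ⟨fun j hj => ⟨smoothing_add_two_pi hc hper j, ?_, ?_⟩, ?_, ?_, ?_⟩
  · simp only [contDiff_nat_iff_iteratedDeriv, iteratedDeriv_eq_iterate]
    refine ⟨fun m hm => ?_, fun m hm => ?_⟩
    · rcases m with _ | m
      · exact continuous_iff_continuousAt.2 fun t => (hasDerivAt_smoothing hc j t).continuousAt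
      · rw [hform j m hm]
        have := (hdiff m hm).continuous
        fun_prop
    · rcases m with _ | m
      · exact fun t => (hasDerivAt_smoothing hc j t).differentiableAt
      · rw [hform j m (by omega)]
        have := hdiff m (by omega)
        fun_prop
  · intro k hk1 hkn t
    obtain ⟨k, rfl⟩ := Nat.exists_eq_add_of_le' hk1
    rw [hform j k hkn, Nat.add_sub_cancel]
  · intro k hk1 hkn j hj t
    obtain ⟨k, rfl⟩ := Nat.exists_eq_add_of_le' hk1
    rw [hform j k hkn]
    refine norm_forward_difference_le (hdiff k hkn) (fun s => ?_) hj t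
    rw [← Function.iterate_succ_apply' deriv k h]
    exact le_ciSup (hbdd (k + 1) hkn) s
  · intro k hk1 hkn
    obtain ⟨k, rfl⟩ := Nat.exists_eq_add_of_le' hk1
    obtain ⟨M, hM⟩ := hbdd (k + 2) hkn
    rw [Metric.tendstoUniformly_iff]
    intro ε hε
    filter_upwards [eventually_ge_atTop 1,
      (tendsto_const_div_atTop_nhds_zero_nat M).eventually_lt_const hε] with j hj hjε t
    have hd := hdiff (k + 1) hkn
    rw [Function.iterate_succ_apply'] at hd
    rw [dist_comm, dist_eq_norm, hform j k (by omega), Function.iterate_succ_apply']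
    refine (norm_forward_difference_sub_deriv_le (hdiff k (by omega)) hd (fun s => ?_) hj
      t).trans_lt hjε
    rw [← Function.iterate_succ_apply' deriv k h, ← Function.iterate_succ_apply' deriv (k + 1) h]
    exact hM ⟨s, rfl⟩
  · intro t
    obtain ⟨k, rfl⟩ := Nat.exists_eq_add_of_le' hn
    simp only [hform _ k (Nat.lt_succ_self k)]
    rw [Function.iterate_succ_apply']
    exact tendsto_forward_difference (hdiff k (Nat.lt_succ_self k) t)
end
end

section
/- Let n ≥ 1, let f : 𝕋 → ℂ be n-times differentiable on 𝕋, and let C ≥ 0. If |f^{[n]}(λ₁,…,λ_{n+1})| ≤ C for every tuple (λ₁,…,λ_{n+1}) ∈ 𝕋^{n+1} of pairwise distinct points, then |f^{[n]}(λ₁,…,λ_{n+1})| ≤ C for every tuple (λ₁,…,λ_{n+1}) ∈ 𝕋^{n+1}. -/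
/-!
If the tuple `v` has distinct entries, the bound is the hypothesis; in general the entries are moved
to distinct positions one at a time, and the bound survives each limit. The point is that
`z ↦ divDiff f n (v₀, …, v_{k-1}, z, v_{k+1}, …)` is continuous along the circle whenever
`v₀, …, v_{k-1}` each occur only once in the tuple (`continuousWithinAt_divDiff`): unfolding the
recursion expresses it, with nonvanishing denominators, through functions `z ↦ divDiff f m (z, w)`
of the first variable, `m ≤ n`. No symmetry of divided differences is needed.

Continuity in the first variable is where differentiability is used, and continuity of the top
derivative is not available. The notion that propagates through the recursion is the pointwise Peano
expansion `PeanoAt g k z₀`. An `n`-times differentiable function has expansions of order `n`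
everywhere (`peanoAt_of_circleDiffOn`), and passing from `g` to the completed difference quotient
`z ↦ (g z - g a) / (z - a)` costs one order, also at `z₀ = a`
(`PeanoAt.slope_of_ne`, `PeanoAt.slope_self`). Hence `z ↦ divDiff f m (z, w)` has expansions of order
`n - m ≥ 0` for every `w`, and order `0` is continuity.
-/

open Filter Topology
open scoped Classical

noncomputable section

/-- The `k`-th order Peano expansion property at `z₀`: along the circle, `g` agrees with a polynomial
up to an error `o((z - z₀) ^ k)`. The degree of the polynomial is left free. For `z₀` on the circle,
order `0` is continuity at `z₀` and order `1` is differentiability at `z₀`. -/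
def PeanoAt (g : ℂ → ℂ) (k : ℕ) (z₀ : ℂ) : Prop :=
  ∃ P : Polynomial ℂ,
    (fun z => g z - P.eval z) =o[𝓝[circleT] z₀] fun z => (z - z₀) ^ k

/-! ### The circle -/

lemma accPt_circleT {z : ℂ} (hz : z ∈ circleT) : AccPt z (𝓟 circleT) := by
  have hS : circleT = Metric.sphere (0 : ℂ) 1 := by ext w; simp [circleT]
  have hpre : IsPreconnected circleT := by
    rw [hS]
    exact isPreconnected_sphere (by rw [Complex.rank_real_complex]; norm_num) _ _
  have hnt : circleT.Nontrivial :=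
    ⟨1, by simp [circleT], -1, by simp [circleT], by norm_num [Complex.ext_iff]⟩
  exact hpre.preperfect_of_nontrivial hnt z hz

/-- A bound valid on the circle off a finite set passes to a point of continuity, because the circle
has no isolated points. -/
lemma norm_le_of_continuousWithinAt {F : ℂ → ℂ} {a : ℂ} {C : ℝ} (ha : a ∈ circleT)
    (hF : ContinuousWithinAt F circleT a) {S : Set ℂ} (hS : S.Finite)
    (hb : ∀ z ∈ circleT, z ∉ S → ‖F z‖ ≤ C) : ‖F a‖ ≤ C := by
  have hne : (𝓝[circleT \ {a}] a).NeBot :=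
    accPt_principal_iff_nhdsWithin.1 (accPt_circleT ha)
  have hF' : Tendsto F (𝓝[circleT \ {a}] a) (𝓝 (F a)) :=
    hF.tendsto.mono_left (nhdsWithin_mono _ Set.sdiff_subset)
  refine le_of_tendsto hF'.norm ?_
  have hS' : (S \ {a})ᶜ ∈ 𝓝 a :=
    (hS.subset Set.sdiff_subset).isClosed.isOpen_compl.mem_nhds (by simp)
  filter_upwards [self_mem_nhdsWithin, mem_nhdsWithin_of_mem_nhds hS'] with z hz hzS
  exact hb z hz.1 fun h => hzS ⟨h, hz.2⟩

/-! ### Peano expansions on the circle -/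

lemma PeanoAt.of_succ {g : ℂ → ℂ} {k : ℕ} {z₀ : ℂ} (h : PeanoAt g (k + 1) z₀) :
    PeanoAt g k z₀ := by
  obtain ⟨P, hP⟩ := h
  refine ⟨P, hP.trans_isBigO ?_⟩
  have h1 : (fun z : ℂ => z - z₀) =O[𝓝[circleT] z₀] fun _ => (1 : ℂ) := by
    have : ContinuousWithinAt (fun z : ℂ => z - z₀) circleT z₀ := by fun_prop
    exact this.tendsto.isBigO_one ℂ
  simpa [pow_succ] using
    (Asymptotics.isBigO_refl (fun z : ℂ => (z - z₀) ^ k) (𝓝[circleT] z₀)).mul h1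

/-- The expanding polynomial takes the value of the function at the centre, since `𝓝[circleT] z₀`
sees `z₀` itself. -/
lemma eval_eq_of_isLittleO {g : ℂ → ℂ} {k : ℕ} {z₀ : ℂ} (hz : z₀ ∈ circleT) {P : Polynomial ℂ}
    (hP : (fun z => g z - P.eval z) =o[𝓝[circleT] z₀] fun z => (z - z₀) ^ k) :
    P.eval z₀ = g z₀ := by
  have h1 : ∀ c : ℝ, 0 < c → ‖g z₀ - P.eval z₀‖ ≤ c * ‖(z₀ - z₀) ^ k‖ := fun c hc =>
    (hP.bound hc).self_of_nhdsWithin hz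
  have h2 : ‖g z₀ - P.eval z₀‖ ≤ 0 := by
    refine le_of_forall_pos_le_add fun ε hε => ?_
    refine (h1 ε hε).trans ?_
    rcases Nat.eq_zero_or_pos k with rfl | hk
    · simp
    · simp [hk.ne', hε.le]
  exact (sub_eq_zero.1 (norm_le_zero_iff.1 h2)).symm

lemma PeanoAt.continuousWithinAt {g : ℂ → ℂ} {z₀ : ℂ} (hz : z₀ ∈ circleT)
    (h : PeanoAt g 0 z₀) : ContinuousWithinAt g circleT z₀ := by
  obtain ⟨P, hP⟩ := h
  have h0 := eval_eq_of_isLittleO hz hP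
  have h1 : Tendsto (fun z => g z - P.eval z) (𝓝[circleT] z₀) (𝓝 0) := by
    simpa using hP
  have h2 : Tendsto (fun z => P.eval z) (𝓝[circleT] z₀) (𝓝 (P.eval z₀)) :=
    P.continuous.continuousWithinAt
  have h3 := h1.add h2
  simpa [ContinuousWithinAt, h0] using h3

lemma hasDerivWithinAt_of_isLittleO {g : ℂ → ℂ} {k : ℕ} {z₀ : ℂ} (hz : z₀ ∈ circleT)
    {P : Polynomial ℂ}
    (hP : (fun z => g z - P.eval z) =o[𝓝[circleT] z₀] fun z => (z - z₀) ^ (k + 1)) :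
    HasDerivWithinAt g (P.derivative.eval z₀) circleT z₀ := by
  have h0 := eval_eq_of_isLittleO hz hP
  have h1 : HasDerivWithinAt (fun z => g z - P.eval z) 0 circleT z₀ := by
    rw [hasDerivWithinAt_iff_isLittleO]
    have h2 : (fun z : ℂ => (z - z₀) ^ (k + 1)) =O[𝓝[circleT] z₀] fun z => z - z₀ := by
      have h3 : (fun z : ℂ => (z - z₀) ^ k) =O[𝓝[circleT] z₀] fun _ => (1 : ℂ) := by
        have : ContinuousWithinAt (fun z : ℂ => (z - z₀) ^ k) circleT z₀ := by fun_prop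
        exact this.tendsto.isBigO_one ℂ
      simpa [pow_succ] using
        h3.mul (Asymptotics.isBigO_refl (fun z : ℂ => z - z₀) (𝓝[circleT] z₀))
    simpa [h0] using hP.trans_isBigO h2
  have h4 := h1.add (P.hasDerivAt z₀).hasDerivWithinAt
  rw [zero_add] at h4
  exact h4.congr_of_mem (fun z _ => by simp) hz

/-- Dividing by `z - a` away from `a` preserves the order of a Peano expansion: the factor `z - a` is
invertible modulo `(z - z₀) ^ (k + 1)`. The value `b` at `a` is irrelevant. -/
lemma PeanoAt.slope_of_ne {g : ℂ → ℂ} {k : ℕ} {z₀ a b c : ℂ} (hne : z₀ ≠ a)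
    (h : PeanoAt g k z₀) : PeanoAt (fun z => if z = a then b else (g z - c) / (z - a)) k z₀ := by
  obtain ⟨P, hP⟩ := h
  obtain ⟨u, v, huv⟩ :
      IsCoprime (Polynomial.X - Polynomial.C a) ((Polynomial.X - Polynomial.C z₀) ^ (k + 1)) :=
    (Polynomial.isCoprime_X_sub_C_of_isUnit_sub (sub_ne_zero.2 hne.symm).isUnit).pow_right
  refine ⟨u * (P - Polynomial.C c), ?_⟩
  have hinv : (fun z : ℂ => (z - a)⁻¹) =O[𝓝[circleT] z₀] fun _ => (1 : ℂ) := by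
    have : ContinuousWithinAt (fun z : ℂ => (z - a)⁻¹) circleT z₀ :=
      ContinuousWithinAt.inv₀ (by fun_prop) (sub_ne_zero.2 hne)
    exact this.tendsto.isBigO_one ℂ
  have hrem : (fun z => (P.eval z - c) * v.eval z * (z - z₀) ^ (k + 1))
      =o[𝓝[circleT] z₀] fun z => (z - z₀) ^ k := by
    have h1 : Tendsto (fun z => (P.eval z - c) * v.eval z * (z - z₀)) (𝓝[circleT] z₀) (𝓝 0) := by
      have : ContinuousWithinAt (fun z => (P.eval z - c) * v.eval z * (z - z₀)) circleT z₀ := by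
        fun_prop
      simpa [ContinuousWithinAt] using this
    have h2 := ((Asymptotics.isLittleO_one_iff ℂ).2 h1).mul_isBigO
      (Asymptotics.isBigO_refl (fun z : ℂ => (z - z₀) ^ k) (𝓝[circleT] z₀))
    refine (h2.congr (fun z => ?_) fun z => ?_) <;> ring
  have hmain := (hP.add hrem).mul_isBigO hinv
  refine hmain.congr' ?_ (by simp)
  have hev : ∀ᶠ z in 𝓝[circleT] z₀, z ≠ a :=
    eventually_nhdsWithin_of_eventually_nhds (isOpen_ne.mem_nhds hne)
  filter_upwards [hev] with z hza
  have hid : u.eval z * (z - a) + v.eval z * (z - z₀) ^ (k + 1) = 1 := by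
    simpa using congrArg (Polynomial.eval z) huv
  have hza' : z - a ≠ 0 := sub_ne_zero.2 hza
  simp only [hza, if_false, Polynomial.eval_mul, Polynomial.eval_sub, Polynomial.eval_C]
  field_simp
  linear_combination (P.eval z - c) * hid

/-- At `a` itself, the difference quotient completed by the derivative loses one order: the expanding
polynomial `P` is replaced by `(P - P(a)) / (X - a)`, whose value at `a` is `P'(a)`. -/
lemma PeanoAt.slope_self {g : ℂ → ℂ} {k : ℕ} {a : ℂ} (ha : a ∈ circleT)
    (h : PeanoAt g (k + 1) a) :
    PeanoAt (fun z => if z = a then cderiv g a else (g z - g a) / (z - a)) k a := by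
  obtain ⟨P, hP⟩ := h
  have h0 := eval_eq_of_isLittleO ha hP
  have hd : cderiv g a = P.derivative.eval a :=
    (hasDerivWithinAt_of_isLittleO ha hP).derivWithin (accPt_circleT ha).uniqueDiffWithinAt
  obtain ⟨Q, hQ⟩ := Polynomial.X_sub_C_dvd_sub_C_eval (p := P) (a := a)
  have hQa : Q.eval a = P.derivative.eval a := by
    have := congrArg (fun R => (Polynomial.derivative R).eval a) hQ
    simpa using this.symm
  have hQz : ∀ z, P.eval z - g a = (z - a) * Q.eval z := fun z => by
    simpa [h0] using congrArg (Polynomial.eval z) hQ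
  refine ⟨Q, ?_⟩
  rw [Asymptotics.isLittleO_iff] at hP ⊢
  intro c hc
  filter_upwards [hP hc] with z hz
  by_cases hza : z = a
  · subst hza
    simp only [if_true, hd, hQa, sub_self, norm_zero]
    positivity
  · have hza' : z - a ≠ 0 := sub_ne_zero.2 hza
    have hpos : 0 < ‖z - a‖ := norm_pos_iff.2 hza'
    have heq : (g z - g a) / (z - a) - Q.eval z = (g z - P.eval z) / (z - a) := by
      field_simp
      linear_combination hQz z
    simp only [hza, if_false, heq, norm_div]
    rw [div_le_iff₀ hpos]
    calc _ ≤ _ := hz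
      _ = _ := by rw [norm_pow, norm_pow, pow_succ]; ring

/-- Integrating an `o`-estimate along the circle. The mean value inequality is applied to
`t ↦ h (z₀ * exp (t * I))` on the arc from `z₀` to `z`, whose length is at most `2 * ‖z - z₀‖`. -/
lemma isLittleO_of_hasDerivWithinAt {h h' : ℂ → ℂ} {k : ℕ} {z₀ : ℂ} (hz₀ : z₀ ∈ circleT)
    (hd : ∀ z ∈ circleT, HasDerivWithinAt h (h' z) circleT z)
    (ho : h' =o[𝓝[circleT] z₀] fun z => (z - z₀) ^ k) :
    (fun z => h z - h z₀) =o[𝓝[circleT] z₀] fun z => (z - z₀) ^ (k + 1) := by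
  have hn0 : ‖z₀‖ = 1 := hz₀
  have hz0 : z₀ ≠ 0 := fun h => by simp [h] at hn0
  rw [Asymptotics.isLittleO_iff]
  intro c hc
  have hc' : 0 < c / 2 ^ (k + 1) := by positivity
  have hb := ho.bound hc'
  rw [Filter.Eventually, Metric.mem_nhdsWithin_iff] at hb
  obtain ⟨δ, hδ, hball⟩ := hb
  have hnear : Metric.ball z₀ (δ / 2) ∈ 𝓝[circleT] z₀ :=
    mem_nhdsWithin_of_mem_nhds (Metric.ball_mem_nhds _ (by positivity))
  filter_upwards [hnear, self_mem_nhdsWithin] with z hzb hz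
  have hn : ‖z‖ = 1 := hz
  have hzne : z ≠ 0 := fun h => by simp [h] at hn
  rw [Metric.mem_ball, dist_eq_norm] at hzb
  set θ : ℝ := (z / z₀).arg with hθ
  have hθle : |θ| ≤ 2 * ‖z - z₀‖ := by
    have h1 := Complex.angle_le_mul_norm_sub hn hn0
    rw [Complex.angle_eq_abs_arg hzne hz0] at h1
    refine h1.trans ?_
    have := Real.pi_le_four
    gcongr
    linarith
  have hγθ : z₀ * Complex.exp (θ * Complex.I) = z := by
    have h1 : ‖z / z₀‖ = 1 := by rw [norm_div, hn, hn0, div_one]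
    have h2 := Complex.norm_mul_exp_arg_mul_I (z / z₀)
    rw [h1, Complex.ofReal_one, one_mul] at h2
    rw [hθ, h2, mul_div_cancel₀ _ hz0]
  have hγmem : ∀ t : ℝ, z₀ * Complex.exp (t * Complex.I) ∈ circleT := fun t => by
    simp [circleT, hn0, Complex.norm_exp_ofReal_mul_I]
  have hγd : ∀ t : ℝ, HasDerivAt (fun t : ℝ => z₀ * Complex.exp (t * Complex.I))
      (z₀ * (Complex.exp (t * Complex.I) * Complex.I)) t := fun t => by
    have h1 : HasDerivAt (fun t : ℝ => (t : ℂ) * Complex.I) Complex.I t := by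
      simpa using (Complex.ofRealCLM.hasDerivAt (x := t)).mul_const Complex.I
    exact (h1.cexp).const_mul z₀
  have hφ : ∀ t : ℝ, HasDerivAt (h ∘ fun t : ℝ => z₀ * Complex.exp (t * Complex.I))
      (z₀ * (Complex.exp (t * Complex.I) * Complex.I) •
        h' (z₀ * Complex.exp (t * Complex.I))) t := fun t => by
    simpa [mul_assoc] using (hd _ (hγmem t)).scomp_hasDerivAt t (hγd t) hγmem
  have hbound : ∀ t ∈ Set.Icc (-|θ|) |θ|,
      ‖z₀ * (Complex.exp (t * Complex.I) * Complex.I) • h' (z₀ * Complex.exp (t * Complex.I))‖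
        ≤ c / 2 ^ (k + 1) * |θ| ^ k := by
    intro t ht
    have hdist : ‖z₀ * Complex.exp (t * Complex.I) - z₀‖ ≤ |θ| := by
      have h1 : z₀ * Complex.exp (t * Complex.I) - z₀
          = z₀ * (Complex.exp (Complex.I * t) - 1) := by rw [mul_comm Complex.I]; ring
      rw [h1, norm_mul, hn0, one_mul]
      exact Real.norm_exp_I_mul_ofReal_sub_one_le.trans (abs_le.2 ht)
    have h2 := @hball (z₀ * Complex.exp (t * Complex.I)) ⟨by
      rw [Metric.mem_ball, dist_eq_norm]; linarith, hγmem t⟩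
    have h3 : ‖z₀ * (Complex.exp (t * Complex.I) * Complex.I) •
        h' (z₀ * Complex.exp (t * Complex.I))‖ = ‖h' (z₀ * Complex.exp (t * Complex.I))‖ := by
      simp [hn0, Complex.norm_exp_ofReal_mul_I]
    rw [h3]
    refine (show _ ≤ _ from h2).trans ?_
    rw [norm_pow]
    gcongr
  have hmv := (convex_Icc (-|θ|) |θ|).norm_image_sub_le_of_norm_hasDerivWithin_le
    (fun t _ => (hφ t).hasDerivWithinAt) hbound
    (show (0 : ℝ) ∈ Set.Icc (-|θ|) |θ| by simp)
    (show θ ∈ Set.Icc (-|θ|) |θ| from ⟨neg_abs_le θ, le_abs_self θ⟩)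
  simp only [Function.comp_apply, hγθ, Complex.ofReal_zero, zero_mul, Complex.exp_zero, mul_one,
    sub_zero, Real.norm_eq_abs] at hmv
  calc ‖h z - h z₀‖ ≤ c / 2 ^ (k + 1) * |θ| ^ k * |θ| := hmv
    _ = c / 2 ^ (k + 1) * |θ| ^ (k + 1) := by ring
    _ ≤ c / 2 ^ (k + 1) * (2 * ‖z - z₀‖) ^ (k + 1) := by gcongr
    _ = c * ‖(z - z₀) ^ (k + 1)‖ := by rw [norm_pow, mul_pow]; field_simp

lemma exists_derivative_eq (P : Polynomial ℂ) : ∃ Q : Polynomial ℂ, Q.derivative = P := by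
  induction P using Polynomial.induction_on' with
  | add p q hp hq =>
    obtain ⟨p', rfl⟩ := hp
    obtain ⟨q', rfl⟩ := hq
    exact ⟨p' + q', by simp⟩
  | monomial m a =>
    refine ⟨Polynomial.monomial (m + 1) (a / (m + 1)), ?_⟩
    have : (m + 1 : ℂ) ≠ 0 := by exact_mod_cast m.succ_ne_zero
    rw [Polynomial.derivative_monomial]
    simp [this]

/-- Taylor's formula with Peano remainder on the circle. -/
lemma peanoAt_of_circleDiffOn (n : ℕ) : ∀ f : ℂ → ℂ, CircleDiffOn (n + 1) f →
    ∀ z₀ ∈ circleT, PeanoAt f (n + 1) z₀ := by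
  induction n with
  | zero =>
    intro f hf z₀ hz₀
    have hd : DifferentiableWithinAt ℂ f circleT z₀ := hf 0 (by omega) z₀ hz₀
    refine ⟨Polynomial.C (f z₀) +
      Polynomial.C (cderiv f z₀) * (Polynomial.X - Polynomial.C z₀), ?_⟩
    have h1 := hasDerivWithinAt_iff_isLittleO.1 hd.hasDerivWithinAt
    refine h1.congr (fun z => ?_) fun z => ?_
    · simp [cderiv]; ring
    · simp
  | succ n ih =>
    intro f hf z₀ hz₀
    have hf' : CircleDiffOn (n + 1) (cderiv f) := fun k hk z hz => by
      rw [← Function.iterate_succ_apply]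
      exact hf (k + 1) (by omega) z hz
    obtain ⟨P, hP⟩ := ih _ hf' z₀ hz₀
    obtain ⟨Q, rfl⟩ := exists_derivative_eq P
    have hd : ∀ z ∈ circleT, HasDerivWithinAt (fun z => f z - Q.eval z)
        (cderiv f z - Q.derivative.eval z) circleT z := fun z hz =>
      HasDerivWithinAt.sub (show DifferentiableWithinAt ℂ f circleT z from
        hf 0 (by omega) z hz).hasDerivWithinAt (Q.hasDerivAt z).hasDerivWithinAt
    refine ⟨Q + Polynomial.C (f z₀ - Q.eval z₀), ?_⟩
    refine (isLittleO_of_hasDerivWithinAt hz₀ hd hP).congr (fun z => ?_) fun z => rfl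
    simp; ring

/-! ### Divided differences -/

/-- Each divided difference costs one order of Peano expansion in its first variable. -/
lemma peanoAt_divDiff {f : ℂ → ℂ} (m : ℕ) : ∀ k : ℕ, (∀ z₀ ∈ circleT, PeanoAt f (m + k) z₀) →
    ∀ w : Fin m → ℂ, ∀ z₀ ∈ circleT,
      PeanoAt (fun z => divDiff f m (Fin.cons z w)) k z₀ := by
  induction m with
  | zero =>
    intro k hf w z₀ hz₀
    simpa [divDiff] using hf z₀ hz₀
  | succ m ih =>
    intro k hf w z₀ hz₀
    have ih' := ih (k + 1) (fun z hz => by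
      have := hf z hz; rwa [show m + 1 + k = m + (k + 1) by ring] at this)
      (fun i => w i.succ) z₀ hz₀
    set g : ℂ → ℂ := fun z => divDiff f m (Fin.cons z fun i => w i.succ) with hg
    have heq : (fun z => divDiff f (m + 1) (Fin.cons z w))
        = fun z => if z = w 0 then cderiv g (w 0) else (g z - g (w 0)) / (z - w 0) := by
      funext z
      have h1 : (Fin.cons z w : Fin (m + 1 + 1) → ℂ) 1 = w 0 := rfl
      simp only [divDiff, Fin.cons_zero, h1, Fin.cons_succ, hg]
      split_ifs with hzw
      · rw [hzw]
      · rfl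
    rw [heq]
    by_cases hzw : z₀ = w 0
    · rw [← hzw]
      exact ih'.slope_self hz₀
    · exact ih'.of_succ.slope_of_ne hzw

/-- If the first `j` entries of a tuple differ from all other entries, then the divided difference is
continuous in the `j`-th entry: unfolding the recursion at these entries uses only quotients with
nonvanishing denominators. The family `V` is the tuple `V a` with its `j`-th entry replaced by the
variable. -/
lemma continuousWithinAt_divDiff {f : ℂ → ℂ} {a : ℂ} (ha : a ∈ circleT) (m : ℕ) :
    ∀ (_ : ∀ z₀ ∈ circleT, PeanoAt f m z₀) (V : ℂ → Fin (m + 1) → ℂ) (j : Fin (m + 1)),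
      (∀ z, V z j = z) → (∀ z, ∀ i ≠ j, V z i = V a i) →
      (∀ i < j, ∀ l ≠ i, V a i ≠ V a l) →
      ContinuousWithinAt (fun z => divDiff f m (V z)) circleT a := by
  induction m with
  | zero =>
    intro hf V j hj hV hgood
    obtain rfl : j = 0 := Fin.fin_one_eq_zero j
    simpa [divDiff, hj] using (hf a ha).continuousWithinAt ha
  | succ m ih =>
    intro hf V j hj hV hgood
    have hf' : ∀ z₀ ∈ circleT, PeanoAt f m z₀ := fun z hz => (hf z hz).of_succ
    rcases Fin.eq_zero_or_eq_succ j with rfl | ⟨j, rfl⟩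
    · have h1 := (peanoAt_divDiff (m + 1) 0 hf (fun i => V a i.succ) a ha).continuousWithinAt ha
      refine h1.congr_of_mem (fun z _ => ?_) ha
      congr 1
      funext i
      refine Fin.cases ?_ (fun i => ?_) i
      · simp [hj]
      · simpa using hV z i.succ (Fin.succ_ne_zero i)
    · have h0 : ∀ z, V z 0 = V a 0 := fun z => hV z 0 (Fin.succ_ne_zero j).symm
      have h01 : V a 0 ≠ V a 1 := hgood 0 (Fin.succ_pos j) 1 (by simp)
      have hc1 : ContinuousWithinAt (fun z => V z 1) circleT a := by
        by_cases h : (1 : Fin (m + 2)) = j.succ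
        · have : (fun z => V z 1) = fun z => z := by funext z; rw [h, hj]
          rw [this]; exact continuousWithinAt_id
        · have : (fun z => V z 1) = fun _ => V a 1 := by funext z; exact hV z 1 h
          rw [this]; exact continuousWithinAt_const
      have hev : ∀ᶠ z in 𝓝[circleT] a, V z 0 ≠ V z 1 := by
        simp only [h0]
        exact (hc1.tendsto.eventually_ne h01.symm).mono fun z hz => hz.symm
      have hB : ContinuousWithinAt
          (fun z => divDiff f m (Fin.cons (V z 1) fun i => V z i.succ.succ)) circleT a := by
        have heq : ∀ z, (Fin.cons (V z 1) fun i => V z i.succ.succ : Fin (m + 1) → ℂ)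
            = fun i => V z i.succ := fun z => by
          funext i
          refine Fin.cases ?_ (fun i => ?_) i <;> simp
        simp only [heq]
        exact ih hf' (fun z i => V z i.succ) j hj
          (fun z i hi => hV z i.succ fun h => hi (Fin.succ_injective _ h))
          fun i hi l hl => hgood i.succ (Fin.succ_lt_succ_iff.2 hi) l.succ
            fun h => hl (Fin.succ_injective _ h)
      have hA : ContinuousWithinAt
          (fun z => divDiff f m (Fin.cons (V z 0) fun i => V z i.succ.succ)) circleT a := by
        have heq : ∀ z, (Fin.cons (V z 0) fun i => V z i.succ.succ : Fin (m + 1) → ℂ)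
            = fun i => V z ((1 : Fin (m + 2)).succAbove i) := fun z => by
          funext i
          refine Fin.cases ?_ (fun i => ?_) i
          · simp
          · simp only [Fin.cons_succ]
            rw [Fin.succAbove_of_lt_succ _ _ (by simp [Fin.lt_def])]
        simp only [heq]
        rcases eq_or_ne j 0 with rfl | hl
        · -- The variable sits in the entry omitted from this tuple.
          have hconst : ∀ z, (fun i => V z ((1 : Fin (m + 2)).succAbove i))
              = fun i => V a ((1 : Fin (m + 2)).succAbove i) := fun z => by
            funext i
            exact hV z _ (Fin.succAbove_ne 1 i)
          simp only [hconst]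
          exact continuousWithinAt_const
        · have hlj : (1 : Fin (m + 2)).succAbove j = j.succ :=
            Fin.succAbove_of_lt_succ _ _ (by
              rw [Fin.lt_def, Fin.val_one, Fin.val_succ]
              have : j.val ≠ 0 := fun h => hl (Fin.ext h)
              omega)
          refine ih hf' (fun z i => V z ((1 : Fin (m + 2)).succAbove i)) j
            (fun z => by rw [hlj]; exact hj z)
            (fun z i hi => hV z _ fun h => hi ?_)
            fun i hi l hl => hgood _ ?_ _ fun h => hl (Fin.succAbove_right_injective h)
          · rw [← hlj] at h
            exact Fin.succAbove_right_injective h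
          · rw [← hlj]
            exact Fin.succAbove_lt_succAbove_iff.2 hi
      have hq := (hA.sub hB).div ((continuousWithinAt_const (b := V a 0)).sub hc1)
        (sub_ne_zero.2 h01)
      have hunf : ∀ z, V z 0 ≠ V z 1 → divDiff f (m + 1) (V z)
          = (divDiff f m (Fin.cons (V z 0) fun i => V z i.succ.succ)
            - divDiff f m (Fin.cons (V z 1) fun i => V z i.succ.succ)) / (V a 0 - V z 1) := by
        intro z hz
        rw [← h0 z]
        exact if_neg hz
      exact hq.congr_of_eventuallyEq (hev.mono hunf) (hunf a h01)

/- STATEMENT 4: A bound on the n-th divided difference of an n-times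
differentiable function on 𝕋 valid at tuples of pairwise distinct points
extends to all tuples of 𝕋^{n+1}. -/

theorem stmt4 (n : ℕ) (hn : 1 ≤ n) (f : ℂ → ℂ) (hf : CircleDiffOn n f) (C : ℝ) (hC : 0 ≤ C)
    (hdist : ∀ v : Fin (n + 1) → ℂ, (∀ i, v i ∈ circleT) → Function.Injective v →
      ‖divDiff f n v‖ ≤ C) :
    ∀ v : Fin (n + 1) → ℂ, (∀ i, v i ∈ circleT) → ‖divDiff f n v‖ ≤ C := by
  obtain ⟨p, rfl⟩ : ∃ p, n = p + 1 := ⟨n - 1, by omega⟩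
  have hP := peanoAt_of_circleDiffOn p f hf
  -- Induction on the number `d` of trailing entries not yet known to occur only once.
  have key : ∀ d k : ℕ, k + d = p + 1 + 1 → ∀ v : Fin (p + 1 + 1) → ℂ, (∀ i, v i ∈ circleT) →
      (∀ i : Fin (p + 1 + 1), i.val < k → ∀ l ≠ i, v i ≠ v l) → ‖divDiff f (p + 1) v‖ ≤ C := by
    intro d
    induction d with
    | zero =>
      intro k hk v hv hgood
      refine hdist v hv fun i l h => ?_
      by_contra hne
      exact hgood i (by omega) l (Ne.symm hne) h
    | succ d ih =>
      intro k hk v hv hgood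
      let j : Fin (p + 1 + 1) := ⟨k, by omega⟩
      have hself : Function.update v j (v j) = v := Function.update_eq_self j v
      have hc := continuousWithinAt_divDiff (hv j) (p + 1) hP (fun z => Function.update v j z) j
        (fun z => by simp) (fun z i hi => by simp [hi])
        (by rw [hself]; exact fun i hi => hgood i hi)
      have hle := norm_le_of_continuousWithinAt (C := C) (hv j) hc (Set.finite_range v)
        (fun z hz hzv => by
          refine ih (k + 1) (by omega) _ (fun i => ?_) fun i hi l hl => ?_
          · rcases eq_or_ne i j with rfl | hij
            · simpa using hz
            · simpa [hij] using hv i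
          · rcases eq_or_ne i j with rfl | hij
            · simp only [Function.update_self, Function.update_of_ne hl]
              exact fun h => hzv ⟨l, h.symm⟩
            · rw [Function.update_of_ne hij]
              rcases eq_or_ne l j with rfl | hlj
              · rw [Function.update_self]
                exact fun h => hzv ⟨i, h⟩
              · rw [Function.update_of_ne hlj]
                have hik : i.val ≠ k := fun h => hij (Fin.ext h)
                exact hgood i (by omega) l hl)
      simpa only [hself] using hle
  intro v hv
  exact key (p + 1 + 1) 0 (by omega) v hv fun i hi => absurd hi (Nat.not_lt_zero _)
end
end

section
/- Let n ≥ 1 and let f : 𝕋 → ℂ be n-times differentiable on 𝕋. Then for every λ ∈ 𝕋, the value of the n-th divided difference of f at the diagonal point (λ,…,λ) ∈ 𝕋^{n+1} equals f^{(n)}(λ)/n!, i.e. f^{[n]}(λ,λ,…,λ) = f^{(n)}(λ)/n!. -/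
/-!
Fix `λ ∈ 𝕋` and put `Aₖ := f^{[k]}(λ,…,λ)`. Unfolding the recursion off the diagonal gives, for every
`z ≠ λ` and with no regularity assumption,
`f^{[n]}(z,λ,…,λ) (z - λ)ⁿ = f z - ∑_{k<n} Aₖ (z - λ)ᵏ`.
If `Aₖ = f^{(k)}(λ)/k!` for all `k ≤ n`, the difference quotient of `z ↦ f^{[n]}(z,λ,…,λ)` at `λ` is
therefore `(f z - ∑_{k≤n} f^{(k)}(λ)/k! (z - λ)ᵏ) / (z - λ)ⁿ⁺¹`, and Taylor's formula with Peano
remainder of order `n + 1` says that it tends to `f^{(n+1)}(λ)/(n+1)!`. Hence the formula follows by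
strong induction on `n`.

The Peano formula on the circle (`peano`) requires no continuity of the top derivative. It is proved by
induction on the order: the derivative of the remainder of `f` is the remainder of `f'`, and a
little-o bound on a derivative integrates to one on the function by the mean value inequality along
the arc `s ↦ λ exp (i s)` (`isLittleO_of_deriv`), arc length and chord length being comparable.
-/

open Filter Topology
open scoped Classical

noncomputable section

lemma circleT_uniqueDiffWithinAt {w : ℂ} (hw : w ∈ circleT) :
    UniqueDiffWithinAt ℂ circleT w := by
  have hs : circleT = Metric.sphere (0 : ℂ) 1 := by
    ext z; simp [circleT]
  rw [uniqueDiffWithinAt_iff_accPt]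
  have hc : IsPreconnected circleT := by
    rw [hs]; exact isPreconnected_sphere (by simp) 0 1
  have hnt : circleT.Nontrivial :=
    ⟨1, by simp [circleT], -1, by simp [circleT], by norm_num⟩
  exact hc.preperfect_of_nontrivial hnt w hw

/-- A little-o bound on a derivative along the circle integrates to a little-o bound, of one order
higher, on the function. -/
lemma isLittleO_of_deriv {lam : ℂ} (hlam : lam ∈ circleT) (k : ℕ) (h h' : ℂ → ℂ)
    (hd : ∀ z ∈ circleT, HasDerivWithinAt h (h' z) circleT z) (h0 : h lam = 0)
    (ho : h' =o[𝓝[circleT] lam] fun z => (z - lam) ^ k) :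
    h =o[𝓝[circleT] lam] fun z => (z - lam) ^ (k + 1) := by
  have hpi : (0 : ℝ) < Real.pi / 2 := by positivity
  have hlam1 : ‖lam‖ = 1 := hlam
  have hlam0 : lam ≠ 0 := by
    rintro rfl; simp at hlam1
  rw [Asymptotics.isLittleO_iff]
  intro c hc
  -- the power of `π / 2` is lost in passing from arc length to chord length
  have hc' : 0 < c / (Real.pi / 2) ^ (k + 1) := by positivity
  have hev := Asymptotics.isLittleO_iff.1 ho hc'
  set c' := c / (Real.pi / 2) ^ (k + 1) with hc'def
  rw [eventually_nhdsWithin_iff, Metric.eventually_nhds_iff] at hev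
  obtain ⟨δ, hδ, hb⟩ := hev
  rw [eventually_nhdsWithin_iff, Metric.eventually_nhds_iff]
  refine ⟨δ / (Real.pi / 2), by positivity, fun z hz hzT => ?_⟩
  have hz1 : ‖z‖ = 1 := hzT
  have hz0 : z ≠ 0 := by
    rintro rfl; simp at hz1
  rw [dist_eq_norm, lt_div_iff₀ hpi] at hz
  set θ := (z / lam).arg with hθ
  have hθle : |θ| ≤ Real.pi / 2 * ‖z - lam‖ := by
    rw [hθ, ← Complex.angle_eq_abs_arg hz0 hlam0]
    exact Complex.angle_le_mul_norm_sub hz1 hlam1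
  let γ : ℝ → ℂ := fun s => lam * Complex.exp (Complex.I * s)
  have hγT : ∀ s, γ s ∈ circleT := fun s => by
    simp [γ, circleT, hlam1, Complex.norm_exp]
  have hγθ : γ θ = z := by
    have h1 := Complex.norm_mul_exp_arg_mul_I (z / lam)
    rw [norm_div, hz1, hlam1] at h1
    simp only [div_one, Complex.ofReal_one, one_mul] at h1
    simp only [γ]
    rw [mul_comm Complex.I, h1, mul_div_cancel₀ _ hlam0]
  have hγ0 : γ 0 = lam := by simp [γ]
  have hγd : ∀ s : ℝ, HasDerivAt γ (γ s * Complex.I) s := fun s => by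
    have h1 : HasDerivAt (fun t : ℝ => Complex.I * (t : ℂ)) (Complex.I * 1) s :=
      (HasDerivAt.ofReal_comp (hasDerivAt_id s)).const_mul _
    have h2 := (h1.cexp).const_mul lam
    convert! h2 using 1
    simp only [γ]; ring
  have hγs : ∀ s, ‖γ s - lam‖ ≤ |s| := fun s => by
    have : γ s - lam = lam * (Complex.exp (Complex.I * s) - 1) := by simp only [γ]; ring
    rw [this, norm_mul, hlam1, one_mul]
    exact Real.norm_exp_I_mul_ofReal_sub_one_le
  have hcomp : ∀ s : ℝ, HasDerivAt (h ∘ γ) ((γ s * Complex.I) • h' (γ s)) s := fun s =>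
    (hd _ (hγT s)).scomp_hasDerivAt s (hγd s) hγT
  have hbound : ∀ s ∈ Set.uIcc 0 θ, ‖(γ s * Complex.I) • h' (γ s)‖ ≤ c' * |θ| ^ k := by
    intro s hs
    have hsθ : |s| ≤ |θ| := by simpa using Set.abs_sub_left_of_mem_uIcc hs
    have h1 : ‖γ s‖ = 1 := hγT s
    rw [norm_smul, norm_mul, h1, Complex.norm_I, one_mul, one_mul]
    refine (hb ?_ (hγT s)).trans ?_
    · rw [dist_eq_norm]
      have := hγs s
      linarith
    · rw [norm_pow]
      gcongr
      exact (hγs s).trans hsθ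
  have hmv := (convex_uIcc (0 : ℝ) θ).norm_image_sub_le_of_norm_hasDerivWithin_le
    (fun s _ => (hcomp s).hasDerivWithinAt) hbound Set.left_mem_uIcc Set.right_mem_uIcc
  simp only [Function.comp, hγθ, hγ0, h0, sub_zero, Real.norm_eq_abs] at hmv
  calc ‖h z‖ ≤ c' * |θ| ^ k * |θ| := hmv
    _ = c' * |θ| ^ (k + 1) := by ring
    _ ≤ c' * (Real.pi / 2 * ‖z - lam‖) ^ (k + 1) := by gcongr
    _ = c * ‖(z - lam) ^ (k + 1)‖ := by
      rw [norm_pow, mul_pow, hc'def]; field_simp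

lemma taylorSum_hasDerivAt (a : ℕ → ℂ) (lam z : ℂ) (n : ℕ) :
    HasDerivAt (fun z => ∑ k ∈ Finset.range (n + 1), a k / (k.factorial : ℂ) * (z - lam) ^ k)
      (∑ k ∈ Finset.range n, a (k + 1) / (k.factorial : ℂ) * (z - lam) ^ k) z := by
  have h : ∀ k ∈ Finset.range (n + 1), HasDerivAt
      (fun z => a k / (k.factorial : ℂ) * (z - lam) ^ k)
      (a k / (k.factorial : ℂ) * (k * (z - lam) ^ (k - 1) * 1)) z := fun k _ =>
    (((hasDerivAt_id z).sub_const lam).pow k).const_mul _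
  have h2 := HasDerivAt.fun_sum h
  convert! h2 using 1
  rw [Finset.sum_range_succ']
  simp only [Nat.cast_zero, zero_mul, mul_zero, add_zero]
  refine Finset.sum_congr rfl fun k _ => ?_
  have h1 : ((k.factorial : ℕ) : ℂ) ≠ 0 := by exact_mod_cast k.factorial_ne_zero
  have h3 : ((k : ℂ) + 1) ≠ 0 := by exact_mod_cast k.succ_ne_zero
  rw [Nat.factorial_succ]
  push_cast
  field_simp

/-- Taylor's formula with Peano remainder along the circle. -/
lemma peano {lam : ℂ} (hlam : lam ∈ circleT) (n : ℕ) : ∀ f : ℂ → ℂ, CircleDiffOn (n + 1) f →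
    (fun z => f z - ∑ k ∈ Finset.range (n + 2), cderiv^[k] f lam / (k.factorial : ℂ) * (z - lam) ^ k)
      =o[𝓝[circleT] lam] fun z => (z - lam) ^ (n + 1) := by
  induction n with
  | zero =>
    intro f hf
    have h := (hf 0 (by simp) lam hlam).hasDerivWithinAt.isLittleO
    simp only [zero_add, pow_one]
    refine h.congr_left fun z => ?_
    simp [Finset.sum_range_succ, cderiv]
    ring
  | succ n ih =>
    intro f hf
    have hf' : CircleDiffOn (n + 1) (cderiv f) := fun k hk z hz => by
      have := hf (k + 1) (by omega) z hz
      rwa [Function.iterate_succ_apply] at this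
    refine isLittleO_of_deriv hlam (n + 1) _ _ (fun z hz => ?_) ?_ (ih (cderiv f) hf')
    · have h1 : HasDerivWithinAt f (cderiv f z) circleT z :=
        (hf 0 (by omega) z hz).hasDerivWithinAt
      have h2 := (taylorSum_hasDerivAt (fun k => cderiv^[k] f lam) lam z (n + 2)).hasDerivWithinAt
        (s := circleT)
      exact h1.sub h2
    · rw [Finset.sum_range_succ']
      simp

lemma divDiff_succ_cons (f : ℂ → ℂ) (n : ℕ) (z lam : ℂ) (hz : z ≠ lam) :
    divDiff f (n + 1) (Fin.cons z fun _ => lam) =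
      (divDiff f n (Fin.cons z fun _ => lam) - divDiff f n (fun _ => lam)) / (z - lam) := by
  have hc : (Fin.cons lam fun _ => lam : Fin (n + 1) → ℂ) = fun _ => lam := by
    ext i; cases i using Fin.cases <;> rfl
  have h1 : (Fin.cons z (fun _ => lam) : Fin (n + 2) → ℂ) 1 = lam := rfl
  rw [divDiff]
  simp only [h1, Fin.cons_zero, Fin.cons_succ, hz, if_false, hc]

lemma divDiff_succ_diag (f : ℂ → ℂ) (n : ℕ) (lam : ℂ) :
    divDiff f (n + 1) (fun _ => lam) =
      cderiv (fun z => divDiff f n (Fin.cons z fun _ => lam)) lam := by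
  rw [divDiff]; simp

/-- Newton's interpolation identity with all nodes but one equal to `lam`. -/
lemma divDiff_cons_mul_pow (f : ℂ → ℂ) (n : ℕ) (z lam : ℂ) (hz : z ≠ lam) :
    divDiff f n (Fin.cons z fun _ => lam) * (z - lam) ^ n =
      f z - ∑ k ∈ Finset.range n, divDiff f k (fun _ => lam) * (z - lam) ^ k := by
  induction n with
  | zero => simp [divDiff]
  | succ n ih =>
    have hz' : z - lam ≠ 0 := sub_ne_zero.2 hz
    rw [divDiff_succ_cons f n z lam hz, Finset.sum_range_succ, ← sub_sub, ← ih]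
    field_simp
    ring

lemma divDiff_diag {lam : ℂ} (hlam : lam ∈ circleT) (f : ℂ → ℂ) (n : ℕ) :
    CircleDiffOn n f → divDiff f n (fun _ => lam) = cderiv^[n] f lam / (n.factorial : ℂ) := by
  induction n using Nat.strong_induction_on with
  | _ n ih =>
  intro hf
  rcases n with _ | n
  · simp [divDiff]
  have hA : ∀ k < n + 1, divDiff f k (fun _ => lam) = cderiv^[k] f lam / (k.factorial : ℂ) :=
    fun k hk => ih k hk fun j hj => hf j (by omega)
  rw [divDiff_succ_diag]
  refine HasDerivWithinAt.derivWithin ?_ (circleT_uniqueDiffWithinAt hlam)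
  rw [hasDerivWithinAt_iff_tendsto_slope]
  have hp := ((peano hlam n f hf).tendsto_div_nhds_zero.mono_left
    (nhdsWithin_mono lam (Set.sdiff_subset (s := circleT) (t := {lam})))).add_const
    (cderiv^[n + 1] f lam / ((n + 1).factorial : ℂ))
  rw [zero_add] at hp
  refine hp.congr' ?_
  filter_upwards [self_mem_nhdsWithin] with z hz
  have hz' : z ≠ lam := hz.2
  have hz0 : z - lam ≠ 0 := sub_ne_zero.2 hz'
  have hc : (Fin.cons lam fun _ => lam : Fin (n + 1) → ℂ) = fun _ => lam := by
    ext i; cases i using Fin.cases <;> rfl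
  have hnewton := divDiff_cons_mul_pow f (n + 1) z lam hz'
  rw [divDiff_succ_cons f n z lam hz', Finset.sum_congr rfl fun k hk => by
    rw [hA k (Finset.mem_range.1 hk)]] at hnewton
  rw [slope_def_field, hc, Finset.sum_range_succ, ← sub_sub, ← hnewton]
  have hzp : (z - lam) ^ (n + 1) ≠ 0 := pow_ne_zero _ hz0
  rw [← sub_mul, mul_div_cancel_right₀ _ hzp, sub_add_cancel]

/- STATEMENT 5: The value of the n-th divided difference on the diagonal:
f^{[n]}(λ,…,λ) = f^{(n)}(λ)/n!. -/

theorem stmt5 (n : ℕ) (hn : 1 ≤ n) (f : ℂ → ℂ) (hf : CircleDiffOn n f)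
    (lam : ℂ) (hlam : lam ∈ circleT) :
    divDiff f n (fun _ => lam) = cderiv^[n] f lam / (n.factorial : ℂ) :=
  divDiff_diag hlam f n hf
end
end

section
/- Let n ≥ 1 and let f : 𝕋 → ℂ be n-times differentiable on 𝕋 with f^{(n)} bounded. For k ≥ 1 define g_k : 𝕋 → ℂ by g_k(z) := k (f^{(n−1)}(z e^{i/k}) − f^{(n−1)}(z)) / (iz). Then each g_k is continuous on 𝕋, the sequence (g_k)_k converges pointwise to f^{(n)} on 𝕋, and sup_{𝕋} |g_k| ≤ sup_{𝕋} |f^{(n)}| for every k ≥ 1. -/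
/-!
Put `h = f^{(n-1)}`. For `z` on the circle the curve `G(t) = h (z e^{it})` is differentiable on `ℝ`,
with `G'(t) = i z e^{it} f^{(n)}(z e^{it})` by the chain rule (`hasDerivAt_rotate`), and
`g_k(z) = (G(1/k) - G(0)) / (1/k) / (iz)`. Pointwise convergence is therefore differentiability of
`G` at `0`. As `|G'| ≤ sup |f^{(n)}|`, the bound is the mean value inequality for `G` on `[0, 1/k]`,
which needs no continuity of `G'`. Continuity of `g_k` follows from that of `h`.
-/

/- STATEMENT 13: The difference quotients g_k(z) = k(f^{(n−1)}(z e^{i/k}) − f^{(n−1)}(z))/(iz)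
are continuous on 𝕋, converge pointwise on 𝕋 to f^{(n)}, and satisfy
sup_𝕋 |g_k| ≤ sup_𝕋 |f^{(n)}| (stated pointwise against the supremum). -/

open Filter Topology
open scoped Classical

noncomputable section

theorem rotate_mem {z : ℂ} (hz : z ∈ circleT) (t : ℝ) :
    z * Complex.exp (t * Complex.I) ∈ circleT := by
  have hz' : ‖z‖ = 1 := hz
  change ‖z * Complex.exp (t * Complex.I)‖ = 1
  rw [norm_mul, Complex.norm_exp_ofReal_mul_I, hz', one_mul]

theorem I_div_natCast (k : ℕ) :
    Complex.I / (k : ℂ) = (((k : ℝ)⁻¹ : ℝ) : ℂ) * Complex.I := by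
  push_cast
  rw [div_eq_mul_inv, mul_comm]

/-- The chain rule along the parametrization `t ↦ z e^{it}` of the circle. -/
theorem hasDerivAt_rotate {h : ℂ → ℂ}
    (hd : ∀ z ∈ circleT, DifferentiableWithinAt ℂ h circleT z)
    {z : ℂ} (hz : z ∈ circleT) (t : ℝ) :
    HasDerivAt (fun s : ℝ => h (z * Complex.exp (s * Complex.I)))
      (cderiv h (z * Complex.exp (t * Complex.I)) *
        (z * Complex.exp (t * Complex.I) * Complex.I)) t := by
  have h1 : HasDerivAt (fun s : ℝ => z * Complex.exp (s * Complex.I))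
      (z * Complex.exp (t * Complex.I) * Complex.I) t := by
    have := (((Complex.ofRealCLM.hasDerivAt (x := t)).mul_const Complex.I).cexp).const_mul z
    simpa [mul_assoc] using this
  have h2 := (hd _ (rotate_mem hz t)).hasDerivWithinAt
  have h3 := h2.scomp (h := fun s : ℝ => z * Complex.exp (s * Complex.I)) t
    (h1.hasDerivWithinAt (s := Set.univ)) (fun s _ => rotate_mem hz s)
  rw [hasDerivWithinAt_univ] at h3
  rw [smul_eq_mul, mul_comm] at h3
  exact h3

theorem stmt13 (n : ℕ) (hn : 1 ≤ n) (f : ℂ → ℂ) (hf : CircleDiffOn n f)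
    (hbd : ∃ C : ℝ, ∀ z ∈ circleT, ‖cderiv^[n] f z‖ ≤ C) :
    (∀ k : ℕ, 1 ≤ k →
      ContinuousOn
        (fun z : ℂ =>
          (k : ℂ) * (cderiv^[n - 1] f (z * Complex.exp (Complex.I / (k : ℂ)))
            - cderiv^[n - 1] f z) / (Complex.I * z)) circleT) ∧
    (∀ z ∈ circleT,
      Tendsto
        (fun k : ℕ =>
          (k : ℂ) * (cderiv^[n - 1] f (z * Complex.exp (Complex.I / (k : ℂ)))
            - cderiv^[n - 1] f z) / (Complex.I * z))
        atTop (𝓝 (cderiv^[n] f z))) ∧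
    (∀ k : ℕ, 1 ≤ k → ∀ z ∈ circleT,
      ‖(k : ℂ) * (cderiv^[n - 1] f (z * Complex.exp (Complex.I / (k : ℂ)))
          - cderiv^[n - 1] f z) / (Complex.I * z)‖
        ≤ ⨆ w : circleT, ‖cderiv^[n] f (w : ℂ)‖) := by
  obtain ⟨m, rfl⟩ : ∃ m, n = m + 1 := ⟨n - 1, by omega⟩
  simp only [Nat.add_sub_cancel, Function.iterate_succ_apply'] at hbd ⊢
  have hd := hf m (Nat.lt_succ_self m)
  generalize cderiv^[m] f = h at hbd hd ⊢
  simp only [I_div_natCast]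
  have hnz : ∀ z ∈ circleT, Complex.I * z ≠ 0 := by
    intro z hz
    have hz' : ‖z‖ = 1 := hz
    exact mul_ne_zero Complex.I_ne_zero (norm_ne_zero_iff.1 (by rw [hz']; exact one_ne_zero))
  have hc : ContinuousOn h circleT := fun z hz => (hd z hz).continuousWithinAt
  refine ⟨fun k _ => ?_, fun z hz => ?_, fun k hk z hz => ?_⟩
  · have hrot : ContinuousOn
        (fun z : ℂ => h (z * Complex.exp ((((k : ℝ)⁻¹ : ℝ) : ℂ) * Complex.I))) circleT :=
      hc.comp (by fun_prop) (fun z hz => rotate_mem hz _)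
    exact (continuousOn_const.mul (hrot.sub hc)).div (by fun_prop) hnz
  · have hG := (hasDerivAt_rotate hd hz 0).tendsto_slope_zero
    have hk : Tendsto (fun k : ℕ => (k : ℝ)⁻¹) atTop (𝓝[≠] 0) := by
      refine tendsto_nhdsWithin_iff.2 ⟨tendsto_inv_atTop_nhds_zero_nat, ?_⟩
      filter_upwards [eventually_gt_atTop 0] with k hk
      have : (k : ℝ) ≠ 0 := by positivity
      simpa using this
    have hlim := (hG.comp hk).div_const (Complex.I * z)
    have hval : cderiv h z * (z * Complex.I) / (Complex.I * z) = cderiv h z := by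
      rw [mul_comm z, mul_div_cancel_right₀ _ (hnz z hz)]
    simpa [Function.comp_def, hval] using hlim
  · obtain ⟨C, hC⟩ := hbd
    have hz' : ‖z‖ = 1 := hz
    -- The hypothesis of boundedness is what makes the real-valued `⨆` a genuine supremum.
    have hbdd : BddAbove (Set.range fun w : circleT => ‖cderiv h (w : ℂ)‖) :=
      ⟨C, by rintro _ ⟨w, rfl⟩; exact hC w w.2⟩
    have hmv := Convex.norm_image_sub_le_of_norm_hasDerivWithin_le
      (C := ⨆ w : circleT, ‖cderiv h (w : ℂ)‖)
      (fun t (_ : t ∈ Set.univ) => (hasDerivAt_rotate hd hz t).hasDerivWithinAt)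
      (fun t _ => by
        have hle := le_ciSup hbdd ⟨_, rotate_mem hz t⟩
        simpa [hz', Complex.norm_exp_ofReal_mul_I] using hle)
      convex_univ (Set.mem_univ 0) (Set.mem_univ ((k : ℝ)⁻¹))
    have hk0 : (0 : ℝ) < k := by exact_mod_cast hk
    rw [norm_div, norm_mul, norm_mul, Complex.norm_I, hz', Complex.norm_natCast, mul_one, div_one]
    rw [sub_zero, Real.norm_of_nonneg (by positivity), ← div_eq_mul_inv, le_div_iff₀ hk0,
      mul_comm] at hmv
    simpa using hmv
end
end
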